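/- arXiv:2012.14525 — 5 statements merged into one kernel-verified Lean document; each statement's English description precedes it below -/
import Mathlib

section
/- Let X be a finite set of n points in ℝ² with the L1 metric, n ≥ 2. If no line induced by a pair of distinct points of X is universal, then the number of distinct lines induced by pairs of distinct points of X is at least ⌈n/2⌉. -/
noncomputable section
open Classical

/-- The L1 (Manhattan) metric on ℝ². -/
def rho (u v : ℝ × ℝ) : ℝ := |u.1 - v.1| + |u.2 - v.2|

/-- `z` is between `u` and `v` (w.r.t. the L1 metric): the three points are
pairwise distinct and `ρ(u,v) = ρ(u,z) + ρ(z,v)`. -/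
def MBtw (u z v : ℝ × ℝ) : Prop :=
  u ≠ z ∧ z ≠ v ∧ u ≠ v ∧ rho u v = rho u z + rho z v

/-- The line of `X` induced by distinct points `u, v`: all `z ∈ X` such that
`z ∈ {u,v}` or one of `u, v, z` is between the other two. -/
def lineThrough (X : Finset (ℝ × ℝ)) (u v : ℝ × ℝ) : Finset (ℝ × ℝ) :=
  X.filter fun z => z = u ∨ z = v ∨ MBtw u z v ∨ MBtw z u v ∨ MBtw u v z

/-- The number of distinct lines induced by pairs of distinct points of `X`. -/
def numLines (X : Finset (ℝ × ℝ)) : ℕ :=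
  (((X ×ˢ X).filter fun p => p.1 ≠ p.2).image fun p => lineThrough X p.1 p.2).card

namespace L1M

variable {ι : Type*}

/-- `b` lies in the bounding box of `a` and `c`. -/
def Bx (x y : ι → ℝ) (a b c : ι) : Prop :=
  ((x a ≤ x b ∧ x b ≤ x c) ∨ (x c ≤ x b ∧ x b ≤ x a)) ∧
  ((y a ≤ y b ∧ y b ≤ y c) ∨ (y c ≤ y b ∧ y b ≤ y a))

/-- The abstract line. -/
def Ln (x y : ι → ℝ) (u v : ι) : Set ι :=
  {w | Bx x y u w v ∨ Bx x y w u v ∨ Bx x y u v w}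

/-- Weak comparability in the product order. -/
def Cmp (x y : ι → ℝ) (a b : ι) : Prop :=
  (x a ≤ x b ∧ y a ≤ y b) ∨ (x b ≤ x a ∧ y b ≤ y a)

/-- Reflection of the second coordinate. -/
def ny (y : ι → ℝ) : ι → ℝ := fun i => - y i

theorem ny_ny (y : ι → ℝ) : ny (ny y) = y := by funext i; simp [ny]

theorem Bx_ny (x y : ι → ℝ) (a b c : ι) : Bx x (ny y) a b c ↔ Bx x y a b c := by
  simp only [Bx, ny, neg_le_neg_iff]; tauto

theorem Ln_ny (x y : ι → ℝ) (u v : ι) : Ln x (ny y) u v = Ln x y u v := by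
  ext w; simp only [Ln, Set.mem_ofPred_eq, Bx_ny]

theorem Bx_comm (x y : ι → ℝ) (a b c : ι) : Bx x y a b c ↔ Bx x y c b a := by
  simp only [Bx]; exact and_congr or_comm or_comm

theorem Ln_comm (x y : ι → ℝ) (u v : ι) : Ln x y u v = Ln x y v u := by
  ext w
  simp only [Ln, Set.mem_ofPred_eq]
  rw [Bx_comm x y u w v, Bx_comm x y w u v, Bx_comm x y u v w]
  exact or_congr_right or_comm

theorem Cmp_comm (x y : ι → ℝ) (u v : ι) : Cmp x y u v ↔ Cmp x y v u := by
  simp only [Cmp]; tauto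

theorem mem_inc {x y : ι → ℝ} {u v : ι} (hx : x u < x v) (hy : y u < y v) (w : ι) :
    w ∈ Ln x y u v ↔ Cmp x y u w ∧ Cmp x y v w := by
  simp only [Ln, Set.mem_ofPred_eq, Bx, Cmp]; grind

theorem mem_dec {x y : ι → ℝ} {u v : ι} (hx : x u < x v) (hy : y v < y u) (w : ι) :
    w ∈ Ln x y u v ↔ Cmp x (ny y) u w ∧ Cmp x (ny y) v w := by
  rw [← Ln_ny]; exact mem_inc hx (by simpa [ny] using hy) w

theorem mem_col {x y : ι → ℝ} {u v : ι} (hx : x u = x v) (hy : y u < y v) (w : ι) :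
    w ∈ Ln x y u v ↔ x w = x u ∨ y w ≤ y u ∨ y v ≤ y w := by
  simp only [Ln, Set.mem_ofPred_eq, Bx]; grind

theorem mem_row {x y : ι → ℝ} {u v : ι} (hx : x u < x v) (hy : y u = y v) (w : ι) :
    w ∈ Ln x y u v ↔ y w = y u ∨ x w ≤ x u ∨ x v ≤ x w := by
  simp only [Ln, Set.mem_ofPred_eq, Bx]; grind

/-- Standing assumptions: distinct points have distinct coordinates, no line is universal,
and `p` is leftmost. -/
structure Cfg (x y : ι → ℝ) (p : ι) : Prop where
  inj : ∀ a b, x a = x b → y a = y b → a = b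
  nu : ∀ u v, u ≠ v → ∃ w, w ∉ Ln x y u v
  left : ∀ w, x p ≤ x w

theorem Cfg.neg {x y : ι → ℝ} {p : ι} (C : Cfg x y p) : Cfg x (ny y) p where
  inj a b h1 h2 := C.inj a b h1 (by simpa [ny] using h2)
  nu u v h := by rw [Ln_ny]; exact C.nu u v h
  left := C.left

/-- Open upper right quadrant at `p`. -/
def U (x y : ι → ℝ) (p a : ι) : Prop := x p < x a ∧ y p < y a

theorem U_ny {x y : ι → ℝ} {p a : ι} : U x (ny y) p a ↔ x p < x a ∧ y a < y p := by
  simp [U, ny]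

/-- `z` has a twin below it in the quadrant. -/
def NonMin (x y : ι → ℝ) (p z : ι) : Prop :=
  U x y p z ∧ ∃ z0, U x y p z0 ∧ z0 ≠ z ∧ x z0 ≤ x z ∧ y z0 ≤ y z ∧
    ∀ w, Cmp x y z0 w ↔ Cmp x y z w

/-- `z` is in the quadrant, with no twin below. -/
def Core (x y : ι → ℝ) (p z : ι) : Prop := U x y p z ∧ ¬ NonMin x y p z

variable {x y : ι → ℝ} {p : ι}

theorem mem_base (C : Cfg x y p) {z : ι} (hz : U x y p z) (w : ι) :
    w ∈ Ln x y p z ↔ ¬ U x (ny y) p w ∧ Cmp x y z w := by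
  rw [mem_inc hz.1 hz.2, U_ny]
  have := C.left w
  simp only [Cmp]; grind

theorem base_eq_iff (C : Cfg x y p) {z z' : ι} (hz : U x y p z) (hz' : U x y p z') :
    Ln x y p z = Ln x y p z' ↔
      ∀ w, ¬ U x (ny y) p w → (Cmp x y z w ↔ Cmp x y z' w) := by
  simp only [Set.ext_iff, mem_base C hz, mem_base C hz']
  constructor
  · intro h w hw; have := h w; simpa [hw] using this
  · intro h w; have := h w; tauto

theorem cmp_D {z d : ι} (hz : U x y p z) (hd : U x (ny y) p d) :
    Cmp x y z d ↔ x d ≤ x z := by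
  rw [U_ny] at hd; unfold U at hz; simp only [Cmp]; grind

theorem not_D {z : ι} (hz : U x y p z) : ¬ U x (ny y) p z := by
  rw [U_ny]; unfold U at hz; grind

theorem same_cmp (C : Cfg x y p) {z z' : ι} (hz : U x y p z) (hz' : U x y p z')
    (h : Ln x y p z = Ln x y p z') : Cmp x y z z' := by
  rw [(base_eq_iff C hz hz').1 h z' (not_D hz')]; simp [Cmp]

theorem core_sep (C : Cfg x y p) {z z' : ι} (hz : Core x y p z) (hz' : Core x y p z')
    (h : Ln x y p z = Ln x y p z') (hne : z ≠ z') (hx : x z ≤ x z') :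
    ∃ d, U x (ny y) p d ∧ x z < x d ∧ x d ≤ x z' := by
  by_contra hcon
  push Not at hcon
  have hc := same_cmp C hz.1 hz'.1 h
  have tw : ∀ w, Cmp x y z w ↔ Cmp x y z' w := by
    intro w
    by_cases hw : U x (ny y) p w
    · rw [cmp_D hz.1 hw, cmp_D hz'.1 hw]
      have := hcon w hw
      constructor
      · intro h; linarith
      · intro h; by_contra h2; push Not at h2; have := this h2; linarith
    · exact (base_eq_iff C hz.1 hz'.1).1 h w hw
  rcases hc with hc | hc
  · exact hz'.2 ⟨hz'.1, z, hz.1, hne, hc.1, hc.2, tw⟩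
  · exact hz.2 ⟨hz.1, z', hz'.1, hne.symm, hc.1, hc.2, fun w => (tw w).symm⟩

theorem core_x (C : Cfg x y p) {z z' : ι} (hz : Core x y p z) (hz' : Core x y p z')
    (h : Ln x y p z = Ln x y p z') (hx : x z = x z') : z = z' := by
  by_contra hne
  obtain ⟨d, _, h1, h2⟩ := core_sep C hz hz' h hne hx.le
  linarith

/-- Common data of the middle elements `z` of a class with last element `b`. -/
structure Mid (x y : ι → ℝ) (p z b : ι) : Prop where
  cz : Core x y p z
  cb : Core x y p b
  same : Ln x y p z = Ln x y p b
  lt : x z < x b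
  last : ∀ c, Core x y p c → Ln x y p c = Ln x y p z → x c ≤ x b
  ex : ∃ a, Core x y p a ∧ Ln x y p a = Ln x y p z ∧ x a < x z

theorem Mid.yle (C : Cfg x y p) {z b : ι} (m : Mid x y p z b) : y z ≤ y b := by
  have := same_cmp C m.cz.1 m.cb.1 m.same
  have := m.lt
  simp only [Cmp] at *; grind

theorem Mid.ne {z b : ι} (m : Mid x y p z b) : z ≠ b := by
  intro h; have := m.lt; rw [h] at this; exact lt_irrefl _ this

theorem Mid.lo (C : Cfg x y p) {z b : ι} (m : Mid x y p z b) :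
    ∃ d, U x (ny y) p d ∧ x d ≤ x z := by
  obtain ⟨a, ca, hs, hl⟩ := m.ex
  obtain ⟨d, hd, _, h2⟩ := core_sep C ca m.cz hs (by rintro rfl; exact lt_irrefl _ hl) hl.le
  exact ⟨d, hd, h2⟩

theorem Mid.hi (C : Cfg x y p) {z b : ι} (m : Mid x y p z b) :
    ∃ d, U x (ny y) p d ∧ x z < x d ∧ x d ≤ x b :=
  core_sep C m.cz m.cb m.same m.ne m.lt.le

theorem Mid.mem_n (C : Cfg x y p) {z b : ι} (m : Mid x y p z b) (hy : y z < y b) (w : ι) :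
    w ∈ Ln x y z b ↔ (U x (ny y) p w ∧ x w ≤ x z) ∨ (¬ U x (ny y) p w ∧ Cmp x y z w) := by
  rw [mem_inc m.lt hy]
  by_cases hw : U x (ny y) p w
  · rw [cmp_D m.cz.1 hw, cmp_D m.cb.1 hw]
    have := m.lt
    constructor
    · intro h; exact Or.inl ⟨hw, h.1⟩
    · rintro (h | h)
      · exact ⟨h.2, by linarith [h.2]⟩
      · exact absurd hw h.1
  · have := (base_eq_iff C m.cz.1 m.cb.1).1 m.same w hw
    tauto

theorem Mid.row_aux (C : Cfg x y p) {z b : ι} (m : Mid x y p z b) (hy : y z = y b) (w : ι)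
    (h1 : x z < x w) (h2 : x w < x b) (h3 : y w ≠ y z) : U x (ny y) p w := by
  by_contra hw
  have := (base_eq_iff C m.cz.1 m.cb.1).1 m.same w hw
  simp only [Cmp] at this; grind

theorem Mid.mem_r (C : Cfg x y p) {z b : ι} (m : Mid x y p z b) (hy : y z = y b) (w : ι) :
    w ∈ Ln x y z b ↔ ¬ (U x (ny y) p w ∧ x z < x w ∧ x w < x b) := by
  rw [mem_row m.lt hy]
  have h1 := m.row_aux C hy w
  have h2 := m.cz.1
  constructor
  · rintro h ⟨h3, h4, h5⟩
    rw [U_ny] at h3; unfold U at h2; grind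
  · intro h
    by_contra hc
    push Not at hc
    exact h ⟨h1 hc.2.1 hc.2.2 hc.1, hc.2.1, hc.2.2⟩

theorem Mid.strip (C : Cfg x y p) {z b : ι} (m : Mid x y p z b) (hy : y z = y b) :
    ∃ d, U x (ny y) p d ∧ x z < x d ∧ x d < x b := by
  obtain ⟨w, hw⟩ := C.nu z b m.ne
  rw [m.mem_r C hy, not_not] at hw
  exact ⟨w, hw⟩

/-- `z` is first in its class, with its base line. -/
def IsF (x y : ι → ℝ) (p z : ι) (l : Set ι) : Prop :=
  Core x y p z ∧ (∀ c, Core x y p c → Ln x y p c = Ln x y p z → x z ≤ x c) ∧ l = Ln x y p z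

/-- `z` is last and not first in its class, with its base line. -/
def IsL (x y : ι → ℝ) (p z : ι) (l : Set ι) : Prop :=
  Core x y p z ∧ (∀ c, Core x y p c → Ln x y p c = Ln x y p z → x c ≤ x z) ∧
    (∃ a, Core x y p a ∧ Ln x y p a = Ln x y p z ∧ x a < x z) ∧ l = Ln x y p z

/-- Normal middle element, with its line. -/
def IsN (x y : ι → ℝ) (p z : ι) (l : Set ι) : Prop :=
  ∃ b, Mid x y p z b ∧ y z < y b ∧ l = Ln x y z b

/-- Row middle element, with its line. -/
def IsR (x y : ι → ℝ) (p z : ι) (l : Set ι) : Prop :=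
  ∃ b, Mid x y p z b ∧ y z = y b ∧ l = Ln x y z b

/-- Points above `p` in its column. -/
def IsV (x y : ι → ℝ) (p z : ι) (l : Set ι) : Prop :=
  x z = x p ∧ y p < y z ∧ l = Ln x y p z

/-- Points to the right of `p` in its row. -/
def IsH (x y : ι → ℝ) (p z : ι) (l : Set ι) : Prop :=
  x p < x z ∧ y z = y p ∧ l = Ln x y p z

theorem IsH.neg {z : ι} {l : Set ι} (h : IsH x y p z l) : IsH x (ny y) p z l := by
  obtain ⟨h1, h2, h3⟩ := h
  exact ⟨h1, by simp [ny, h2], by rw [Ln_ny]; exact h3⟩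

theorem core_cover [Finite ι] (C : Cfg x y p) {z : ι} (hz : Core x y p z) :
    ∃ l, IsF x y p z l ∨ IsL x y p z l ∨ IsN x y p z l ∨ IsR x y p z l := by
  by_cases h1 : ∀ c, Core x y p c → Ln x y p c = Ln x y p z → x z ≤ x c
  · exact ⟨_, Or.inl ⟨hz, h1, rfl⟩⟩
  push Not at h1
  by_cases h2 : ∀ c, Core x y p c → Ln x y p c = Ln x y p z → x c ≤ x z
  · exact ⟨_, Or.inr (Or.inl ⟨hz, h2, h1, rfl⟩)⟩
  push Not at h2
  obtain ⟨c, hc, hcs, hcx⟩ := h2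
  obtain ⟨b, ⟨hb, hbs⟩, hmax⟩ := Set.exists_max_image
    {c | Core x y p c ∧ Ln x y p c = Ln x y p z} x (Set.toFinite _) ⟨c, hc, hcs⟩
  have m : Mid x y p z b :=
    { cz := hz, cb := hb, same := hbs.symm, lt := lt_of_lt_of_le hcx (hmax c ⟨hc, hcs⟩),
      last := fun c h1 h2 => hmax c ⟨h1, h2⟩, ex := h1 }
  rcases (m.yle C).lt_or_eq with h | h
  · exact ⟨_, Or.inr (Or.inr (Or.inl ⟨b, m, h, rfl⟩))⟩
  · exact ⟨_, Or.inr (Or.inr (Or.inr ⟨b, m, h, rfl⟩))⟩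

/-! Membership of `p` in the lines -/

theorem p_mem_base (z : ι) : p ∈ Ln x y p z := by
  simp only [Ln, Set.mem_ofPred_eq, Bx]
  right; left
  constructor
  · rcases le_total (x p) (x z) with h | h
    · left; exact ⟨le_rfl, h⟩
    · right; exact ⟨h, le_rfl⟩
  · rcases le_total (y p) (y z) with h | h
    · left; exact ⟨le_rfl, h⟩
    · right; exact ⟨h, le_rfl⟩

theorem not_D_p : ¬ U x (ny y) p p := by simp [U]

theorem IsN.p_mem (C : Cfg x y p) {z : ι} {l : Set ι} (h : IsN x y p z l) : p ∈ l := by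
  obtain ⟨b, m, hy, rfl⟩ := h
  rw [m.mem_n C hy]
  exact Or.inr ⟨not_D_p, Or.inr ⟨m.cz.1.1.le, m.cz.1.2.le⟩⟩

theorem IsR.p_mem (C : Cfg x y p) {z : ι} {l : Set ι} (h : IsR x y p z l) : p ∈ l := by
  obtain ⟨b, m, hy, rfl⟩ := h
  rw [m.mem_r C hy]
  exact fun h => not_D_p h.1

/-! Signatures -/

theorem sigB (C : Cfg x y p) {z : ι} {l : Set ι} (h : IsF x y p z l ∨ IsL x y p z l) :
    (∀ w ∈ l, ¬ U x (ny y) p w) ∧ ∃ w ∈ l, U x y p w := by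
  have : Core x y p z ∧ l = Ln x y p z := by
    rcases h with h | h
    · exact ⟨h.1, h.2.2⟩
    · exact ⟨h.1, h.2.2.2⟩
  obtain ⟨hz, rfl⟩ := this
  constructor
  · intro w hw; rw [mem_base C hz.1] at hw; exact hw.1
  · refine ⟨z, ?_, hz.1⟩
    rw [mem_base C hz.1]; exact ⟨not_D hz.1, by simp [Cmp]⟩

theorem sigN (C : Cfg x y p) {z : ι} {l : Set ι} (h : IsN x y p z l) :
    (∃ w ∈ l, U x (ny y) p w) ∧ (∃ w, w ∉ l ∧ U x (ny y) p w) ∧ ∃ w ∈ l, U x y p w := by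
  obtain ⟨b, m, hy, rfl⟩ := h
  refine ⟨?_, ?_, ?_⟩
  · obtain ⟨d, hd, h1⟩ := m.lo C
    exact ⟨d, by rw [m.mem_n C hy]; exact Or.inl ⟨hd, h1⟩, hd⟩
  · obtain ⟨d, hd, h1, h2⟩ := m.hi C
    refine ⟨d, ?_, hd⟩
    rw [m.mem_n C hy]; rintro (h | h)
    · linarith [h.2]
    · exact h.1 hd
  · refine ⟨z, ?_, m.cz.1⟩
    rw [m.mem_n C hy]; exact Or.inr ⟨not_D m.cz.1, by simp [Cmp]⟩

theorem sigR (C : Cfg x y p) {z : ι} {l : Set ι} (h : IsR x y p z l) :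
    (∃ w ∈ l, U x (ny y) p w) ∧ (∃ w, w ∉ l ∧ U x (ny y) p w) ∧ (∃ w ∈ l, U x y p w) ∧
      ∀ w, ¬ U x (ny y) p w → w ∈ l := by
  obtain ⟨b, m, hy, rfl⟩ := h
  refine ⟨?_, ?_, ?_, ?_⟩
  · obtain ⟨d, hd, h1⟩ := m.lo C
    exact ⟨d, by rw [m.mem_r C hy]; rintro ⟨_, h2, _⟩; linarith, hd⟩
  · obtain ⟨d, hd, h1, h2⟩ := m.strip C hy
    refine ⟨d, ?_, hd⟩
    rw [m.mem_r C hy, not_not]; exact ⟨hd, h1, h2⟩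
  · refine ⟨z, ?_, m.cz.1⟩
    rw [m.mem_r C hy]; exact fun h => not_D m.cz.1 h.1
  · intro w hw; rw [m.mem_r C hy]; exact fun h => hw h.1

theorem sigV (_C : Cfg x y p) {z : ι} {l : Set ι} (h : IsV x y p z l) (w : ι) :
    w ∈ l ↔ x w = x p ∨ y w ≤ y p ∨ y z ≤ y w := by
  obtain ⟨h1, h2, rfl⟩ := h
  exact mem_col h1.symm h2 w

theorem sigH (C : Cfg x y p) {z : ι} {l : Set ι} (h : IsH x y p z l) (w : ι) :
    w ∈ l ↔ y w = y p ∨ x w = x p ∨ x z ≤ x w := by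
  obtain ⟨h1, h2, rfl⟩ := h
  rw [mem_row h1 h2.symm w]
  have := C.left w
  constructor
  · rintro (h | h | h)
    · exact Or.inl h
    · exact Or.inr (Or.inl (le_antisymm h this))
    · exact Or.inr (Or.inr h)
  · rintro (h | h | h)
    · exact Or.inl h
    · exact Or.inr (Or.inl h.le)
    · exact Or.inr (Or.inr h)

/-! Injectivity within families -/

theorem VV (C : Cfg x y p) {z z' : ι} {l : Set ι} (h : IsV x y p z l) (h' : IsV x y p z' l) :
    z = z' := by
  wlog hy : y z ≤ y z' generalizing z z'
  · exact (this h' h (le_of_not_ge hy)).symm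
  have hxx : x z = x z' := h.1.trans h'.1.symm
  rcases hy.eq_or_lt with e | hlt
  · exact C.inj _ _ hxx e
  exfalso
  obtain ⟨w, hw⟩ := C.nu z z' (by rintro rfl; exact lt_irrefl _ hlt)
  rw [mem_col hxx hlt] at hw
  push Not at hw
  have e := (sigV C h w).symm.trans (sigV C h' w)
  have h1 := h.1
  have h2 := h.2.1
  grind

theorem HH (C : Cfg x y p) {z z' : ι} {l : Set ι} (h : IsH x y p z l) (h' : IsH x y p z' l) :
    z = z' := by
  wlog hy : x z ≤ x z' generalizing z z'
  · exact (this h' h (le_of_not_ge hy)).symm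
  have hyy : y z = y z' := h.2.1.trans h'.2.1.symm
  rcases hy.eq_or_lt with e | hlt
  · exact C.inj _ _ e hyy
  exfalso
  obtain ⟨w, hw⟩ := C.nu z z' (by rintro rfl; exact lt_irrefl _ hlt)
  rw [mem_row hlt hyy] at hw
  push Not at hw
  have e := (sigH C h w).symm.trans (sigH C h' w)
  have h1 := h.1
  have h2 := h.2.1
  grind

theorem FF (C : Cfg x y p) {z z' : ι} {l : Set ι} (h : IsF x y p z l) (h' : IsF x y p z' l) :
    z = z' := by
  have e : Ln x y p z = Ln x y p z' := h.2.2.symm.trans h'.2.2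
  exact core_x C h.1 h'.1 e (le_antisymm (h.2.1 _ h'.1 e.symm) (h'.2.1 _ h.1 e))

theorem LL (C : Cfg x y p) {z z' : ι} {l : Set ι} (h : IsL x y p z l) (h' : IsL x y p z' l) :
    z = z' := by
  have e : Ln x y p z = Ln x y p z' := h.2.2.2.symm.trans h'.2.2.2
  exact core_x C h.1 h'.1 e (le_antisymm (h'.2.1 _ h.1 e) (h.2.1 _ h'.1 e.symm))

theorem NN (C : Cfg x y p) {z z' : ι} {l : Set ι} (h : IsN x y p z l) (h' : IsN x y p z' l) :
    z = z' := by
  wlog hx : x z ≤ x z' generalizing z z'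
  · exact (this h' h (le_of_not_ge hx)).symm
  obtain ⟨b, m, hy, hl⟩ := h
  obtain ⟨b', m', hy', hl'⟩ := h'
  have key : ∀ w, _ := fun w => (m.mem_n C hy w).symm.trans
    ((Set.ext_iff.1 (hl.symm.trans hl') w).trans (m'.mem_n C hy' w))
  have e : Ln x y p z = Ln x y p z' := by
    rw [base_eq_iff C m.cz.1 m'.cz.1]
    intro w hw
    have := key w
    simpa [hw] using this
  by_contra hne
  obtain ⟨d, hd, h1, h2⟩ := core_sep C m.cz m'.cz e hne hx
  have := key d
  simp [hd] at this
  linarith [this.2 h2]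

theorem RR (C : Cfg x y p) {z z' : ι} {l : Set ι} (h : IsR x y p z l) (h' : IsR x y p z' l) :
    z = z' := by
  wlog hx : x z ≤ x z' generalizing z z'
  · exact (this h' h (le_of_not_ge hx)).symm
  obtain ⟨b, m, hy, hl⟩ := h
  obtain ⟨b', m', hy', hl'⟩ := h'
  have key : ∀ w, _ := fun w => (m.mem_r C hy w).symm.trans
    ((Set.ext_iff.1 (hl.symm.trans hl') w).trans (m'.mem_r C hy' w))
  by_contra hne
  rcases hx.eq_or_lt with e | hlt
  · have hyne : y z ≠ y z' := fun h => hne (C.inj _ _ e h)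
    have h1 := (base_eq_iff C m.cz.1 m.cb.1).1 m.same z' (not_D m'.cz.1)
    have h2 := (base_eq_iff C m'.cz.1 m'.cb.1).1 m'.same z (not_D m.cz.1)
    have := m.lt
    have := m'.lt
    simp only [Cmp] at h1 h2
    grind
  · obtain ⟨d, hd, h1, h2⟩ := m'.strip C hy'
    have hd' := key d
    have hdb : x d < x b := by
      by_contra hc
      exact (hd'.1 (fun h => hc h.2.2)) ⟨hd, h1, h2⟩
    have hyz : y z' = y z := by
      by_contra hc
      exact not_D m'.cz.1 (m.row_aux C hy z' hlt (h1.trans hdb) hc)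
    obtain ⟨w, hw⟩ := C.nu z z' hne
    rw [mem_row hlt hyz.symm] at hw
    push Not at hw
    have hwD := m.row_aux C hy w hw.2.1 (hw.2.2.trans (h1.trans hdb)) hw.1
    refine (key w).2 ?_ ⟨hwD, hw.2.1, hw.2.2.trans (h1.trans hdb)⟩
    rintro ⟨_, h3, _⟩
    linarith [hw.2.2]

/-! `H` against the others -/

theorem HL (C : Cfg x y p) {h z : ι} {l : Set ι} (hh : IsH x y p h l) (hz : IsL x y p z l) :
    False := by
  obtain ⟨cz, -, ⟨c, cc, hs, hlt⟩, hl⟩ := hz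
  obtain ⟨d, hd, h1, h2⟩ := core_sep C cc cz hs (by rintro rfl; exact lt_irrefl _ hlt) hlt.le
  have hm := sigH C hh
  have hc : h ∈ Ln x y p c := by rw [hs, ← hl, hm]; exact Or.inl hh.2.1
  rw [mem_base C cc.1] at hc
  have hd2 : d ∉ l := by rw [hl, mem_base C cz.1]; exact fun h => h.1 hd
  rw [hm] at hd2
  push Not at hd2
  have := hh.2.1
  have := cc.1.2
  have hc2 := hc.2
  simp only [Cmp] at hc2
  grind

theorem HN (C : Cfg x y p) {h z : ι} {l : Set ι} (hh : IsH x y p h l) (hz : IsN x y p z l) :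
    False := by
  obtain ⟨b, m, hy, rfl⟩ := hz
  have hm := fun w => (sigH C hh w).symm.trans (m.mem_n C hy w)
  obtain ⟨d, hd, h1⟩ := m.lo C
  obtain ⟨e, he, h2, h3⟩ := m.hi C
  have a1 := hm d
  have a2 := hm e
  simp only [hd, he, true_and, not_true_eq_false, false_and, or_false] at a1 a2
  rw [U_ny] at hd he
  grind

theorem HR (C : Cfg x y p) {h z : ι} {l : Set ι} (hh : IsH x y p h l) (hz : IsR x y p z l) :
    False := by
  obtain ⟨b, m, hy, rfl⟩ := hz
  have hm := fun w => (sigH C hh w).symm.trans (m.mem_r C hy w)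
  obtain ⟨e, he, h2, h3⟩ := m.strip C hy
  have a1 := (hm z).2 (fun h => not_D m.cz.1 h.1)
  have a2 : ¬ _ := fun h => (hm e).1 h ⟨he, h2, h3⟩
  have := m.cz.1
  unfold U at this
  rw [U_ny] at he
  grind

theorem bad_unique (C : Cfg x y p) {z1 z2 z3 z4 : ι} {l l' : Set ι} (h1 : IsN x y p z1 l)
    (h2 : IsR x y p z2 l) (h3 : IsN x y p z3 l') (h4 : IsR x y p z4 l') : z1 = z3 := by
  wlog hx : x z1 ≤ x z3 generalizing z1 z2 z3 z4 l l'
  · exact (this h3 h4 h1 h2 (le_of_not_ge hx)).symm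
  have f1 := (sigR C h2).2.2.2
  have f3 := (sigR C h4).2.2.2
  obtain ⟨b1, m1, hy1, rfl⟩ := h1
  obtain ⟨b3, m3, hy3, rfl⟩ := h3
  obtain ⟨b2, m2, hy2, hl⟩ := h2
  have c1 : ∀ w, ¬ U x (ny y) p w → Cmp x y z1 w := fun w hw => by
    have := f1 w hw
    rw [m1.mem_n C hy1] at this
    simpa [hw] using this
  have c3 : ∀ w, ¬ U x (ny y) p w → Cmp x y z3 w := fun w hw => by
    have := f3 w hw
    rw [m3.mem_n C hy3] at this
    simpa [hw] using this
  have e13 : Ln x y p z1 = Ln x y p z3 :=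
    (base_eq_iff C m1.cz.1 m3.cz.1).2 fun w hw => by simp [c1 w hw, c3 w hw]
  by_contra hne
  obtain ⟨d, hd, d1, d2⟩ := core_sep C m1.cz m3.cz e13 hne hx
  obtain ⟨e, he, e1, e2⟩ := m3.hi C
  have key : ∀ w, U x (ny y) p w → x z1 < x w → x z2 < x w ∧ x w < x b2 := by
    intro w hw h
    have : w ∉ Ln x y z1 b1 := by
      rw [m1.mem_n C hy1]
      rintro (h2 | h2)
      · linarith [h2.2]
      · exact h2.1 hw
    rw [hl, m2.mem_r C hy2, not_not] at this
    exact this.2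
  have k1 := (key d hd d1).1
  have k2 := (key e he (by linarith)).2
  have hyz : y z3 = y z2 := by
    by_contra hc
    exact not_D m3.cz.1 (m2.row_aux C hy2 z3 (by linarith) (by linarith) hc)
  have c2 : ∀ w, ¬ U x (ny y) p w → Cmp x y z2 w := fun w hw => by
    have a := c3 w hw
    have b := (base_eq_iff C m2.cz.1 m2.cb.1).1 m2.same w hw
    simp only [Cmp] at a b ⊢
    grind
  have e23 : Ln x y p z2 = Ln x y p z3 :=
    (base_eq_iff C m2.cz.1 m3.cz.1).2 fun w hw => by simp [c2 w hw, c3 w hw]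
  have hb : b2 = b3 := by
    apply core_x C m2.cb m3.cb (by rw [← m2.same, ← m3.same, e23])
    apply le_antisymm
    · exact m3.last _ m2.cb (by rw [← m2.same, e23])
    · exact m2.last _ m3.cb (by rw [← m3.same, e23])
  rw [← hb, ← hy2, hyz] at hy3
  exact lt_irrefl _ hy3

/-- The lines avoiding `p` attached to the non-minimal points. -/
def IsP (x y : ι → ℝ) (p z : ι) (l : Set ι) : Prop :=
  NonMin x y p z ∧ ∃ w,
    ((x w < x z ∧ y z < y w ∧ ∀ q, x q < x z → y z < y q → y w ≤ y q) ∨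
      ((∀ q, ¬ (x q < x z ∧ y z < y q)) ∧ x z < x w ∧ y w < y z ∧
        ∀ q, x z < x q → y q < y z → x w ≤ x q)) ∧ l = Ln x y w z

theorem twin_strict (C : Cfg x y p) {z z0 : ι} (hne : z0 ≠ z) (hx : x z0 ≤ x z)
    (hy : y z0 ≤ y z) (h : ∀ w, Cmp x y z0 w ↔ Cmp x y z w) : x z0 < x z ∧ y z0 < y z := by
  obtain ⟨q, hq⟩ := C.nu z0 z hne
  have hc := h q
  simp only [Cmp] at hc
  rcases hx.eq_or_lt with e | h1
  · rcases hy.eq_or_lt with e2 | h2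
    · exact absurd (C.inj _ _ e e2) hne
    · rw [mem_col e h2] at hq
      grind
  · rcases hy.eq_or_lt with e2 | h2
    · rw [mem_row h1 e2] at hq
      grind
    · exact ⟨h1, h2⟩

theorem NonMin.twin (C : Cfg x y p) {z : ι} (h : NonMin x y p z) :
    ∃ z0, U x y p z0 ∧ x z0 < x z ∧ y z0 < y z ∧ ∀ w, Cmp x y z0 w ↔ Cmp x y z w := by
  obtain ⟨_, z0, h1, h2, h3, h4, h5⟩ := h
  obtain ⟨h6, h7⟩ := twin_strict C h2 h3 h4 h5
  exact ⟨z0, h1, h6, h7, h5⟩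

theorem IsP.ex [Finite ι] (C : Cfg x y p) {z : ι} (h : NonMin x y p z) : ∃ l, IsP x y p z l := by
  by_cases hnw : ∃ q, x q < x z ∧ y z < y q
  · obtain ⟨w, ⟨h1, h2⟩, hmin⟩ := Set.exists_min_image {q | x q < x z ∧ y z < y q} y
      (Set.toFinite _) hnw
    exact ⟨_, h, w, Or.inl ⟨h1, h2, fun q a b => hmin q ⟨a, b⟩⟩, rfl⟩
  · have hse : ∃ q, x z < x q ∧ y q < y z := by
      obtain ⟨z0, h1, h2, h3, h4⟩ := h.twin C
      obtain ⟨q, hq⟩ := C.nu z0 z (by rintro rfl; exact lt_irrefl _ h2)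
      rw [mem_inc h2 h3, h4, and_self] at hq
      push Not at hnw
      have := hnw q
      simp only [Cmp] at hq
      exact ⟨q, by grind, by grind⟩
    obtain ⟨w, ⟨h1, h2⟩, hmin⟩ := Set.exists_min_image {q | x z < x q ∧ y q < y z} x
      (Set.toFinite _) hse
    exact ⟨_, h, w, Or.inr ⟨fun q hq => hnw ⟨q, hq⟩, h1, h2, fun q a b => hmin q ⟨a, b⟩⟩, rfl⟩

/-- weak comparability in the reflected order -/
def Dc (x y : ι → ℝ) (a b : ι) : Prop :=
  (x a ≤ x b ∧ y b ≤ y a) ∨ (x b ≤ x a ∧ y a ≤ y b)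

theorem Dc_iff (a b : ι) : Cmp x (ny y) a b ↔ Dc x y a b := by
  simp [Cmp, Dc, ny]

theorem IsP.data {z : ι} {l : Set ι} (h : IsP x y p z l) : ∃ w,
    ((x w < x z ∧ y z < y w ∧ ∀ q, x q < x z → y z < y q → y w ≤ y q) ∨
      ((∀ q, ¬ (x q < x z ∧ y z < y q)) ∧ x z < x w ∧ y w < y z ∧
        ∀ q, x z < x q → y q < y z → x w ≤ x q)) ∧
    ∀ q, q ∈ l ↔ Dc x y w q ∧ Dc x y z q := by
  obtain ⟨_, w, hw, rfl⟩ := h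
  refine ⟨w, hw, fun q => ?_⟩
  rw [← Dc_iff, ← Dc_iff]
  rcases hw with hw | hw
  · exact mem_dec hw.1 hw.2.1 q
  · rw [Ln_comm, mem_dec hw.2.1 hw.2.2.1 q, and_comm]

theorem IsP.p_not_mem {z : ι} {l : Set ι} (h : IsP x y p z l) : p ∉ l := by
  obtain ⟨w, _, hm⟩ := h.data
  rw [hm]
  have := h.1.1
  simp only [Dc, U] at *
  grind

theorem PP_nw (C : Cfg x y p) {z z' : ι} {l : Set ι} (h : IsP x y p z l) (h' : IsP x y p z' l)
    (hx : x z < x z') (hy : y z' < y z) : False := by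
  obtain ⟨w, hw, hm⟩ := h.data
  obtain ⟨w', hw', hm'⟩ := h'.data
  obtain ⟨z0, _, h2, h3, h4⟩ := h.1.twin C
  have hl : z ∈ l := by
    rw [hm]; rcases hw with hw | hw <;> simp only [Dc] <;> grind
  have hw2 : x w' < x z' ∧ y z' < y w' ∧ ∀ q, x q < x z' → y z' < y q → y w' ≤ y q := by
    rcases hw' with hw' | hw'
    · exact hw'
    · exact absurd ⟨hx, hy⟩ (hw'.1 z)
  have hz0 : z0 ∉ l := by
    rw [hm]; simp only [Dc]; grind
  have hc := h4 z'
  have hzl := (hm' z).1 hl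
  have hz0l : ¬ _ := fun h => hz0 ((hm' z0).2 h)
  have hq := hw2.2.2 z0
  clear hm hm' hw hw' h4
  simp only [Dc, Cmp] at *
  grind

theorem PP_row (C : Cfg x y p) {z z' : ι} {l : Set ι} (h : IsP x y p z l) (h' : IsP x y p z' l)
    (hx : x z < x z') (hy : y z = y z') : False := by
  obtain ⟨w, hw, hm⟩ := h.data
  obtain ⟨w', hw', hm'⟩ := h'.data
  obtain ⟨z0, _, h2, h3, h4⟩ := h'.1.twin C
  obtain ⟨q, hq⟩ := C.nu z z' (by rintro rfl; exact lt_irrefl _ hx)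
  rw [mem_row hx hy] at hq
  push Not at hq
  have a1 := h4 z
  have a2 := h4 q
  have hqy : y q < y z := by
    by_contra hc
    simp only [Cmp] at a1 a2
    grind
  have a3 := (hm q).symm.trans (hm' q)
  have a4 := (hm w).symm.trans (hm' w)
  clear hm hm' hw' h4
  rcases hw with hw | hw
  · simp only [Dc] at a3
    grind
  · have a5 := hw.2.2.2 q
    simp only [Dc] at a4
    grind

theorem PP_col (C : Cfg x y p) {z z' : ι} {l : Set ι} (h : IsP x y p z l) (h' : IsP x y p z' l)
    (hx : x z = x z') (hy : y z < y z') : False := by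
  obtain ⟨w, hw, hm⟩ := h.data
  obtain ⟨w', hw', hm'⟩ := h'.data
  obtain ⟨z0, _, h2, h3, h4⟩ := h'.1.twin C
  obtain ⟨q, hq⟩ := C.nu z z' (by rintro rfl; exact lt_irrefl _ hy)
  rw [mem_col hx hy] at hq
  push Not at hq
  have a1 := h4 z
  have a2 := h4 q
  have hqy : x q < x z := by
    by_contra hc
    simp only [Cmp] at a1 a2
    grind
  have a4 := (hm w).symm.trans (hm' w)
  clear hm hm' hw' h4
  rcases hw with hw | hw
  · have a5 := hw.2.2 q
    simp only [Dc] at a4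
    grind
  · exact hw.1 q ⟨hqy, hq.2.1⟩

theorem IsP.self_mem {z : ι} {l : Set ι} (h : IsP x y p z l) : z ∈ l := by
  obtain ⟨w, hw, hm⟩ := h.data
  rw [hm]; rcases hw with hw | hw <;> simp only [Dc] <;> grind

theorem PP (C : Cfg x y p) {z z' : ι} {l : Set ι} (h : IsP x y p z l) (h' : IsP x y p z' l) :
    z = z' := by
  wlog hx : x z < x z' ∨ (x z = x z' ∧ y z ≤ y z') generalizing z z'
  · refine (this h' h ?_).symm
    grind
  have hc : Dc x y z' z := by
    obtain ⟨w', hw', hm'⟩ := h'.data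
    exact ((hm' z).1 h.self_mem).2
  rcases hx with hx | ⟨hx, hy⟩
  · exfalso
    rcases lt_trichotomy (y z) (y z') with hy | hy | hy
    · simp only [Dc] at hc; grind
    · exact PP_row C h h' hx hy
    · exact PP_nw C h h' hx hy
  · rcases hy.eq_or_lt with e | hy
    · exact C.inj _ _ hx e
    · exact (PP_col C h h' hx hy).elim

theorem PP_cross (C : Cfg x y p) {z d : ι} {l : Set ι} (h : IsP x y p z l)
    (h' : IsP x (ny y) p d l) : False := by
  obtain ⟨w, hw, hm⟩ := h.data
  obtain ⟨w', hw', hm'⟩ := h'.data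
  have a1 := ((hm d).1 h'.self_mem).2
  have a2 := ((hm' z).1 h.self_mem).2
  obtain ⟨z0, b1, b2, b3, b4⟩ := h.1.twin C
  have a3 := b4 d
  have a4 := h.1.1
  have a5 := h'.1.1
  rw [U_ny] at a5
  clear hm hm' hw hw' b4
  simp only [Dc, Cmp, ny, U] at *
  grind

/-- All lines. -/
def Lns (x y : ι → ℝ) : Set (Set ι) := {l | ∃ u v, u ≠ v ∧ l = Ln x y u v}

theorem Lns_ny : Lns x (ny y) = Lns x y := by
  ext l; simp only [Lns, Ln_ny]

/-- Lines containing `p`. -/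
def LnP (x y : ι → ℝ) (p : ι) : Set (Set ι) := {l | l ∈ Lns x y ∧ p ∈ l}

/-- Lines avoiding `p`. -/
def LnA (x y : ι → ℝ) (p : ι) : Set (Set ι) := {l | l ∈ Lns x y ∧ p ∉ l}

theorem LnP_ny : LnP x (ny y) p = LnP x y p := by simp only [LnP, Lns_ny]

theorem LnA_ny : LnA x (ny y) p = LnA x y p := by simp only [LnA, Lns_ny]

theorem card_Lns [Finite ι] : (Lns x y).ncard = (LnP x y p).ncard + (LnA x y p).ncard := by
  rw [← Set.ncard_union_eq]
  · congr 1; ext l; simp only [LnP, LnA, Set.mem_union, Set.mem_ofPred_eq]; tauto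
  · rw [Set.disjoint_left]; intro l h1 h2; exact h2.2 h1.2

theorem inj_count [Finite ι] (R : ι → Set ι → Prop) (S : Set ι) (T : Set (Set ι))
    (h1 : ∀ z ∈ S, ∃ l, R z l) (h2 : ∀ z l, R z l → l ∈ T)
    (h3 : ∀ z z' l, R z l → R z' l → z = z') : S.ncard ≤ T.ncard := by
  choose! f hf using h1
  refine Set.ncard_le_ncard_of_injOn f (fun z hz => h2 z _ (hf z hz)) ?_ (Set.toFinite _)
  intro a ha b hb hab
  exact h3 a b _ (hf a ha) (by rw [hab]; exact hf b hb)

theorem base_LnP {z : ι} (h : z ≠ p) : Ln x y p z ∈ LnP x y p :=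
  ⟨⟨p, z, h.symm, rfl⟩, p_mem_base z⟩

theorem U.ne {z : ι} (h : U x y p z) : z ≠ p := by
  rintro rfl; exact lt_irrefl _ h.1

theorem IsF.mem {z : ι} {l : Set ι} (h : IsF x y p z l) : l ∈ LnP x y p := by
  rw [h.2.2]; exact base_LnP h.1.1.ne

theorem IsL.mem {z : ι} {l : Set ι} (h : IsL x y p z l) : l ∈ LnP x y p := by
  rw [h.2.2.2]; exact base_LnP h.1.1.ne

theorem IsV.mem {z : ι} {l : Set ι} (h : IsV x y p z l) : l ∈ LnP x y p := by
  rw [h.2.2]; exact base_LnP (by rintro rfl; exact lt_irrefl _ h.2.1)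

theorem IsH.mem {z : ι} {l : Set ι} (h : IsH x y p z l) : l ∈ LnP x y p := by
  rw [h.2.2]; exact base_LnP (by rintro rfl; exact lt_irrefl _ h.1)

theorem IsN.mem (C : Cfg x y p) {z : ι} {l : Set ι} (h : IsN x y p z l) : l ∈ LnP x y p := by
  refine ⟨?_, h.p_mem C⟩
  obtain ⟨b, m, _, e⟩ := h
  exact ⟨z, b, m.ne, e⟩

theorem IsR.mem (C : Cfg x y p) {z : ι} {l : Set ι} (h : IsR x y p z l) : l ∈ LnP x y p := by
  refine ⟨?_, h.p_mem C⟩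
  obtain ⟨b, m, _, e⟩ := h
  exact ⟨z, b, m.ne, e⟩

theorem IsP.mem {z : ι} {l : Set ι} (h : IsP x y p z l) : l ∈ LnA x y p := by
  refine ⟨?_, h.p_not_mem⟩
  obtain ⟨_, w, hw, e⟩ := h
  refine ⟨w, z, ?_, e⟩
  rintro rfl
  rcases hw with hw | hw
  · exact lt_irrefl _ hw.1
  · exact lt_irrefl _ hw.2.1

/-- First family in the general case. -/
def R1 (x y : ι → ℝ) (p z : ι) (l : Set ι) : Prop :=
  IsV x y p z l ∨ IsF x y p z l ∨ IsN x y p z l ∨ IsF x (ny y) p z l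

/-- Second family in the general case. -/
def R2 (x y : ι → ℝ) (p z : ι) (l : Set ι) : Prop :=
  IsH x y p z l ∨ IsL x y p z l ∨ IsR x y p z l ∨ IsL x (ny y) p z l ∨
    (IsN x (ny y) p z l ∧ ¬ ∃ z', IsR x (ny y) p z' l) ∨ IsR x (ny y) p z l

/-- Exceptional elements. -/
def Bad (x y : ι → ℝ) (p : ι) : Set ι :=
  {z | ∃ l z', IsN x (ny y) p z l ∧ IsR x (ny y) p z' l}

theorem sig_cross (C : Cfg x y p) {z : ι} {l : Set ι}
    (h : IsF x (ny y) p z l ∨ IsL x (ny y) p z l) :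
    (∀ w ∈ l, ¬ U x y p w) ∧ ∃ w ∈ l, U x (ny y) p w := by
  have := sigB C.neg h
  rwa [ny_ny] at this

theorem R1_inj (C : Cfg x y p) (hD : ∃ d, U x (ny y) p d)
    (hV : ∀ v, x v = x p → ∃ u, U x y p u ∧ y v ≤ y u) {z z' : ι} {l : Set ι}
    (h : R1 x y p z l) (h' : R1 x y p z' l) : z = z' := by
  have v1 : ∀ z, IsV x y p z l → (∀ w, U x (ny y) p w → w ∈ l) ∧ ∃ w ∈ l, U x y p w := by
    intro z h
    constructor
    · intro w hw
      rw [U_ny] at hw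
      rw [sigV C h]; exact Or.inr (Or.inl hw.2.le)
    · obtain ⟨u, hu, hy⟩ := hV z h.1
      exact ⟨u, by rw [sigV C h]; exact Or.inr (Or.inr hy), hu⟩
  obtain ⟨d, hd⟩ := hD
  have vF : ∀ z z', IsV x y p z l → IsF x y p z' l → False := fun z z' h h' =>
    (sigB C (Or.inl h')).1 d ((v1 z h).1 d hd) hd
  have vN : ∀ z z', IsV x y p z l → IsN x y p z' l → False := fun z z' h h' => by
    obtain ⟨_, ⟨w, hw, hw2⟩, _⟩ := sigN C h'
    exact hw ((v1 z h).1 w hw2)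
  have vD : ∀ z z', IsV x y p z l → IsF x (ny y) p z' l → False := fun z z' h h' => by
    obtain ⟨_, w, hw, hu⟩ := v1 z h
    exact (sig_cross C (Or.inl h')).1 w hw hu
  have fN : ∀ z z', IsF x y p z l → IsN x y p z' l → False := fun z z' h h' => by
    obtain ⟨⟨w, hw, hw2⟩, _⟩ := sigN C h'
    exact (sigB C (Or.inl h)).1 w hw hw2
  have fD : ∀ z z', IsF x y p z l → IsF x (ny y) p z' l → False := fun z z' h h' => by
    obtain ⟨_, w, hw, hu⟩ := sigB C (Or.inl h)
    exact (sig_cross C (Or.inl h')).1 w hw hu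
  have nD : ∀ z z', IsN x y p z l → IsF x (ny y) p z' l → False := fun z z' h h' => by
    obtain ⟨_, _, w, hw, hu⟩ := sigN C h
    exact (sig_cross C (Or.inl h')).1 w hw hu
  rcases h with h | h | h | h <;> rcases h' with h' | h' | h' | h'
  · exact VV C h h'
  · exact (vF _ _ h h').elim
  · exact (vN _ _ h h').elim
  · exact (vD _ _ h h').elim
  · exact (vF _ _ h' h).elim
  · exact FF C h h'
  · exact (fN _ _ h h').elim
  · exact (fD _ _ h h').elim
  · exact (vN _ _ h' h).elim
  · exact (fN _ _ h' h).elim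
  · exact NN C h h'
  · exact (nD _ _ h h').elim
  · exact (vD _ _ h' h).elim
  · exact (fD _ _ h' h).elim
  · exact (nD _ _ h' h).elim
  · exact FF C.neg h h'

theorem R2_inj (C : Cfg x y p) {z z' : ι} {l : Set ι}
    (h : R2 x y p z l) (h' : R2 x y p z' l) : z = z' := by
  have hL : ∀ z z', IsH x y p z l → IsL x y p z' l → False := fun z z' h h' => HL C h h'
  have hR : ∀ z z', IsH x y p z l → IsR x y p z' l → False := fun z z' h h' => HR C h h'
  have hL2 : ∀ z z', IsH x y p z l → IsL x (ny y) p z' l → False := fun z z' h h' =>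
    HL C.neg h.neg h'
  have hN2 : ∀ z z', IsH x y p z l → IsN x (ny y) p z' l → False := fun z z' h h' =>
    HN C.neg h.neg h'
  have hR2 : ∀ z z', IsH x y p z l → IsR x (ny y) p z' l → False := fun z z' h h' =>
    HR C.neg h.neg h'
  have lR : ∀ z z', IsL x y p z l → IsR x y p z' l → False := fun z z' h h' => by
    obtain ⟨⟨w, hw, hw2⟩, _⟩ := sigR C h'
    exact (sigB C (Or.inr h)).1 w hw hw2
  have lL2 : ∀ z z', IsL x y p z l → IsL x (ny y) p z' l → False := fun z z' h h' => by
    obtain ⟨_, w, hw, hu⟩ := sigB C (Or.inr h)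
    exact (sig_cross C (Or.inr h')).1 w hw hu
  have lN2 : ∀ z z', IsL x y p z l → IsN x (ny y) p z' l → False := fun z z' h h' => by
    obtain ⟨_, _, w, hw, hu⟩ := sigN C.neg h'
    exact (sigB C (Or.inr h)).1 w hw hu
  have lR2 : ∀ z z', IsL x y p z l → IsR x (ny y) p z' l → False := fun z z' h h' => by
    obtain ⟨_, _, ⟨w, hw, hu⟩, _⟩ := sigR C.neg h'
    exact (sigB C (Or.inr h)).1 w hw hu
  have rL2 : ∀ z z', IsR x y p z l → IsL x (ny y) p z' l → False := fun z z' h h' => by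
    obtain ⟨_, _, ⟨w, hw, hu⟩, _⟩ := sigR C h
    exact (sig_cross C (Or.inr h')).1 w hw hu
  have rN2 : ∀ z z', IsR x y p z l → IsN x (ny y) p z' l → False := fun z z' h h' => by
    obtain ⟨_, ⟨w, hw, hu⟩, _⟩ := sigN C.neg h'
    rw [ny_ny] at hu
    exact hw ((sigR C h).2.2.2 w (not_D hu))
  have rR2 : ∀ z z', IsR x y p z l → IsR x (ny y) p z' l → False := fun z z' h h' => by
    obtain ⟨_, ⟨w, hw, hu⟩, _⟩ := sigR C.neg h'
    rw [ny_ny] at hu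
    exact hw ((sigR C h).2.2.2 w (not_D hu))
  have l2N2 : ∀ z z', IsL x (ny y) p z l → IsN x (ny y) p z' l → False := fun z z' h h' => by
    obtain ⟨⟨w, hw, hu⟩, _⟩ := sigN C.neg h'
    rw [ny_ny] at hu
    exact (sig_cross C (Or.inr h)).1 w hw hu
  have l2R2 : ∀ z z', IsL x (ny y) p z l → IsR x (ny y) p z' l → False := fun z z' h h' => by
    obtain ⟨⟨w, hw, hu⟩, _⟩ := sigR C.neg h'
    rw [ny_ny] at hu
    exact (sig_cross C (Or.inr h)).1 w hw hu
  rcases h with h | h | h | h | h | h <;> rcases h' with h' | h' | h' | h' | h' | h'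
  · exact HH C h h'
  · exact (hL _ _ h h').elim
  · exact (hR _ _ h h').elim
  · exact (hL2 _ _ h h').elim
  · exact (hN2 _ _ h h'.1).elim
  · exact (hR2 _ _ h h').elim
  · exact (hL _ _ h' h).elim
  · exact LL C h h'
  · exact (lR _ _ h h').elim
  · exact (lL2 _ _ h h').elim
  · exact (lN2 _ _ h h'.1).elim
  · exact (lR2 _ _ h h').elim
  · exact (hR _ _ h' h).elim
  · exact (lR _ _ h' h).elim
  · exact RR C h h'
  · exact (rL2 _ _ h h').elim
  · exact (rN2 _ _ h h'.1).elim
  · exact (rR2 _ _ h h').elim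
  · exact (hL2 _ _ h' h).elim
  · exact (lL2 _ _ h' h).elim
  · exact (rL2 _ _ h' h).elim
  · exact LL C.neg h h'
  · exact (l2N2 _ _ h h'.1).elim
  · exact (l2R2 _ _ h h').elim
  · exact (hN2 _ _ h' h.1).elim
  · exact (lN2 _ _ h' h.1).elim
  · exact (rN2 _ _ h' h.1).elim
  · exact (l2N2 _ _ h' h.1).elim
  · exact NN C.neg h.1 h'.1
  · exact (h.2 ⟨_, h'⟩).elim
  · exact (hR2 _ _ h' h).elim
  · exact (lR2 _ _ h' h).elim
  · exact (rR2 _ _ h' h).elim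
  · exact (l2R2 _ _ h' h).elim
  · exact (h'.2 ⟨_, h⟩).elim
  · exact RR C.neg h h'

theorem R1.mem (C : Cfg x y p) {z : ι} {l : Set ι} (h : R1 x y p z l) : l ∈ LnP x y p := by
  rcases h with h | h | h | h
  · exact h.mem
  · exact h.mem
  · exact h.mem C
  · rw [← LnP_ny]; exact h.mem

theorem R2.mem (C : Cfg x y p) {z : ι} {l : Set ι} (h : R2 x y p z l) : l ∈ LnP x y p := by
  rcases h with h | h | h | h | h | h
  · exact h.mem
  · exact h.mem
  · exact h.mem C
  · rw [← LnP_ny]; exact h.mem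
  · rw [← LnP_ny]; exact h.1.mem C.neg
  · rw [← LnP_ny]; exact h.mem C.neg

/-- Lines through one point of each open quadrant avoid `p`. -/
theorem avoid_ud (_C : Cfg x y p) {u d : ι} (hu : U x y p u) (hd : U x (ny y) p d) :
    Ln x y u d ∈ LnA x y p := by
  have hd' := hd
  rw [U_ny] at hd
  refine ⟨⟨u, d, ?_, rfl⟩, ?_⟩
  · rintro rfl; exact not_D hu hd'
  · unfold U at hu
    simp only [Ln, Set.mem_ofPred_eq, Bx]
    grind

theorem avoid_bad [Finite ι] (C : Cfg x y p) (hD : ∃ d, U x (ny y) p d) (hU : ∃ u, U x y p u) :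
    1 + (Bad x y p).ncard ≤ (LnA x y p).ncard := by
  rcases Set.eq_empty_or_nonempty (Bad x y p) with h | h
  · rw [h, Set.ncard_empty]
    obtain ⟨d, hd⟩ := hD
    obtain ⟨u, hu⟩ := hU
    exact (Set.ncard_pos (Set.toFinite _)).2 ⟨_, avoid_ud C hu hd⟩
  · have h1 : (Bad x y p).ncard ≤ 1 := by
      rw [Set.ncard_le_one (Set.toFinite _)]
      rintro a ⟨l, a', ha1, ha2⟩ b ⟨l', b', hb1, hb2⟩
      exact bad_unique C.neg ha1 ha2 hb1 hb2
    obtain ⟨z, l, z', -, b, m, hy, -⟩ := h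
    obtain ⟨u, hu, h2, h3⟩ := m.strip C.neg hy
    rw [ny_ny] at hu
    have hz' := m.cz.1
    have hb' := m.cb.1
    have e1 := avoid_ud C hu hz'
    have e2 := avoid_ud C hu hb'
    have hne : Ln x y u z' ≠ Ln x y u b := by
      intro e
      have hb : b ∈ Ln x y u b := by
        rw [Ln_comm]; exact p_mem_base u
      rw [← e] at hb
      rw [U_ny] at hz' hb'
      unfold U at hu
      simp only [Ln, Set.mem_ofPred_eq, Bx, ny] at hb hy
      grind
    have h4 : ({Ln x y u z', Ln x y u b} : Set (Set ι)).ncard ≤ (LnA x y p).ncard := by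
      apply Set.ncard_le_ncard _ (Set.toFinite _)
      rintro a (rfl | rfl)
      · exact e1
      · exact e2
    rw [Set.ncard_pair hne] at h4
    omega

theorem avoid_P [Finite ι] (C : Cfg x y p) :
    ({z | NonMin x y p z ∨ NonMin x (ny y) p z} : Set ι).ncard ≤ (LnA x y p).ncard := by
  apply inj_count (fun z l => IsP x y p z l ∨ IsP x (ny y) p z l)
  · rintro z (h | h)
    · obtain ⟨l, hl⟩ := IsP.ex C h; exact ⟨l, Or.inl hl⟩
    · obtain ⟨l, hl⟩ := IsP.ex C.neg h; exact ⟨l, Or.inr hl⟩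
  · rintro z l (h | h)
    · exact h.mem
    · rw [← LnA_ny]; exact h.mem
  · rintro z z' l (h | h) (h' | h')
    · exact PP C h h'
    · exact (PP_cross C h h').elim
    · exact (PP_cross C h' h).elim
    · exact PP C.neg h h'

theorem general_case [Finite ι] (C : Cfg x y p) (hD : ∃ d, U x (ny y) p d)
    (hV : ∀ v, x v = x p → ∃ u, U x y p u ∧ y v ≤ y u)
    (hcol : ∀ v, x v = x p → y p ≤ y v) : Nat.card ι ≤ 2 * (Lns x y).ncard := by
  have hU : ∃ u, U x y p u := by
    obtain ⟨u, hu, _⟩ := hV p rfl; exact ⟨u, hu⟩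
  have c1 : ({z | ∃ l, R1 x y p z l} : Set ι).ncard ≤ (LnP x y p).ncard :=
    inj_count (R1 x y p) _ _ (fun z h => h) (fun z l h => h.mem C)
      (fun z z' l h h' => R1_inj C hD hV h h')
  have c2 : ({z | ∃ l, R2 x y p z l} : Set ι).ncard ≤ (LnP x y p).ncard :=
    inj_count (R2 x y p) _ _ (fun z h => h) (fun z l h => h.mem C)
      (fun z z' l h h' => R2_inj C h h')
  have c3 := avoid_bad C hD hU
  have c4 := avoid_P C
  have c5 := card_Lns (x := x) (y := y) (p := p)
  have cov : (Set.univ : Set ι) ⊆ {p} ∪ ({z | ∃ l, R1 x y p z l} ∪ ({z | ∃ l, R2 x y p z l} ∪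
      (Bad x y p ∪ {z | NonMin x y p z ∨ NonMin x (ny y) p z}))) := by
    intro z _
    by_cases hp : z = p
    · exact Or.inl hp
    right
    by_cases hnm : NonMin x y p z ∨ NonMin x (ny y) p z
    · exact Or.inr (Or.inr (Or.inr hnm))
    push Not at hnm
    rcases (C.left z).eq_or_lt with hx | hx
    · refine Or.inl ⟨_, Or.inl ⟨hx.symm, ?_, rfl⟩⟩
      exact lt_of_le_of_ne (hcol z hx.symm) fun h => hp (C.inj _ _ hx h).symm
    rcases lt_trichotomy (y z) (y p) with hy | hy | hy
    · obtain ⟨l, hl⟩ := core_cover C.neg (z := z) ⟨U_ny.2 ⟨hx, hy⟩, hnm.2⟩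
      rcases hl with hl | hl | hl | hl
      · exact Or.inl ⟨l, Or.inr (Or.inr (Or.inr hl))⟩
      · exact Or.inr (Or.inl ⟨l, Or.inr (Or.inr (Or.inr (Or.inl hl)))⟩)
      · by_cases hb : ∃ z', IsR x (ny y) p z' l
        · obtain ⟨z', hz'⟩ := hb
          exact Or.inr (Or.inr (Or.inl ⟨l, z', hl, hz'⟩))
        · exact Or.inr (Or.inl ⟨l, Or.inr (Or.inr (Or.inr (Or.inr (Or.inl ⟨hl, hb⟩))))⟩)
      · exact Or.inr (Or.inl ⟨l, Or.inr (Or.inr (Or.inr (Or.inr (Or.inr hl))))⟩)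
    · exact Or.inr (Or.inl ⟨_, Or.inl ⟨hx, hy, rfl⟩⟩)
    · obtain ⟨l, hl⟩ := core_cover C (z := z) ⟨⟨hx, hy⟩, hnm.1⟩
      rcases hl with hl | hl | hl | hl
      · exact Or.inl ⟨l, Or.inr (Or.inl hl)⟩
      · exact Or.inr (Or.inl ⟨l, Or.inr (Or.inl hl)⟩)
      · exact Or.inl ⟨l, Or.inr (Or.inr (Or.inl hl))⟩
      · exact Or.inr (Or.inl ⟨l, Or.inr (Or.inr (Or.inl hl))⟩)
  have d0 := Set.ncard_le_ncard cov (Set.toFinite _)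
  rw [Set.ncard_univ] at d0
  have d1 := d0.trans (Set.ncard_union_le _ _)
  have d2 := Set.ncard_union_le {z | ∃ l, R1 x y p z l} ({z | ∃ l, R2 x y p z l} ∪
      (Bad x y p ∪ {z | NonMin x y p z ∨ NonMin x (ny y) p z}))
  have d3 := Set.ncard_union_le {z | ∃ l, R2 x y p z l}
      (Bad x y p ∪ {z | NonMin x y p z ∨ NonMin x (ny y) p z})
  have d4 := Set.ncard_union_le (Bad x y p) {z | NonMin x y p z ∨ NonMin x (ny y) p z}
  rw [Set.ncard_singleton] at d1
  omega

theorem corner_case [Finite ι] (C : Cfg x y p) (hlow : ∀ w, y p ≤ y w) (h2 : 2 ≤ Nat.card ι) :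
    Nat.card ι ≤ 2 * (Lns x y).ncard := by
  have hD : ∀ d, ¬ U x (ny y) p d := by
    intro d hd; rw [U_ny] at hd; linarith [hlow d, hd.2]
  have cinj : ∀ z z', Core x y p z → Core x y p z' → Ln x y p z = Ln x y p z' → z = z' := by
    intro z z' hz hz' e
    by_contra hne
    rcases le_total (x z) (x z') with h | h
    · obtain ⟨d, hd, _⟩ := core_sep C hz hz' e hne h; exact hD d hd
    · obtain ⟨d, hd, _⟩ := core_sep C hz' hz e.symm (Ne.symm hne) h; exact hD d hd
  have cV : ({z | ∃ l, IsV x y p z l} : Set ι).ncard ≤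
      ({l | ∃ z, IsV x y p z l} : Set (Set ι)).ncard :=
    inj_count (IsV x y p) _ _ (fun z h => h) (fun z l h => ⟨z, h⟩)
      (fun z z' l h h' => VV C h h')
  have cH : ({z | ∃ l, IsH x y p z l} : Set ι).ncard ≤
      ({l | ∃ z, IsH x y p z l} : Set (Set ι)).ncard :=
    inj_count (IsH x y p) _ _ (fun z h => h) (fun z l h => ⟨z, h⟩)
      (fun z z' l h h' => HH C h h')
  have cC : ({z | Core x y p z} : Set ι).ncard ≤
      ({l | ∃ z, Core x y p z ∧ l = Ln x y p z} : Set (Set ι)).ncard :=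
    inj_count (fun z l => Core x y p z ∧ l = Ln x y p z) _ _ (fun z h => ⟨_, h, rfl⟩)
      (fun z l h => ⟨z, h⟩)
      (fun z z' l h h' => cinj z z' h.1 h'.1 (h.2.symm.trans h'.2))
  set P : Set (Set ι) := {l | ∃ z, IsV x y p z l} with hP
  set Q : Set (Set ι) := {l | ∃ z, IsH x y p z l} with hQ
  set R : Set (Set ι) := {l | ∃ z, Core x y p z ∧ l = Ln x y p z} with hR
  have hPs : P ∪ Q ⊆ LnP x y p := by
    rintro l (⟨z, h⟩ | ⟨z, h⟩)
    · exact h.mem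
    · exact h.mem
  have hRs : (P ∩ Q) ∪ R ⊆ LnP x y p := by
    rintro l (⟨⟨z, h⟩, _⟩ | ⟨z, h, rfl⟩)
    · exact h.mem
    · exact base_LnP h.1.ne
  have hdis : Disjoint (P ∩ Q) R := by
    rw [Set.disjoint_left]
    rintro l ⟨⟨v, hv⟩, ⟨h, hh⟩⟩ ⟨z, hz, e⟩
    obtain ⟨w, hw⟩ := C.nu p z hz.1.ne.symm
    rw [← e] at hw
    have m1 : w ∉ l := hw
    rw [sigV C hv] at m1
    have m2 : w ∉ l := hw
    rw [sigH C hh] at m2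
    rw [e, mem_base C hz.1] at hw
    have m3 : v ∈ l := by rw [sigV C hv]; exact Or.inl hv.1
    have m4 : h ∈ l := by rw [sigH C hh]; exact Or.inl hh.2.1
    rw [e, mem_base C hz.1] at m3 m4
    have m5 : ¬ Cmp x y z w := fun h => hw ⟨hD w, h⟩
    have m6 := m3.2
    have m7 := m4.2
    have k1 := hv.1
    have k2 := hh.2.1
    have k3 := hz.1
    clear hw m3 m4
    simp only [Cmp, U] at *
    grind
  have n1 := Set.ncard_union_add_ncard_inter P Q (Set.toFinite _) (Set.toFinite _)
  have n2 := Set.ncard_union_eq hdis (Set.toFinite _) (Set.toFinite _)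
  have n3 := Set.ncard_le_ncard hPs (Set.toFinite _)
  have n4 := Set.ncard_le_ncard hRs (Set.toFinite _)
  have c4 := avoid_P C
  have c5 := card_Lns (x := x) (y := y) (p := p)
  have hU : ∃ u, U x y p u := by
    have : Nontrivial ι := Finite.one_lt_card_iff_nontrivial.1 (by omega)
    obtain ⟨q, hq⟩ := exists_ne p
    rcases (C.left q).eq_or_lt with hx | hx
    · have hy : y p < y q := lt_of_le_of_ne (hlow q) fun h => hq (C.inj _ _ hx h).symm
      obtain ⟨w, hw⟩ := C.nu p q hq.symm
      rw [mem_col hx hy] at hw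
      push Not at hw
      exact ⟨w, lt_of_le_of_ne (C.left w) (Ne.symm hw.1), hw.2.1⟩
    · rcases (hlow q).eq_or_lt with hy | hy
      · obtain ⟨w, hw⟩ := C.nu p q hq.symm
        rw [mem_row hx hy] at hw
        push Not at hw
        exact ⟨w, hw.2.1, lt_of_le_of_ne (hlow w) (Ne.symm hw.1)⟩
      · exact ⟨q, hx, hy⟩
  have hA : 1 ≤ (LnA x y p).ncard := by
    obtain ⟨u, hu⟩ := hU
    obtain ⟨w, hw⟩ := C.nu p u hu.ne.symm
    rw [mem_base C hu] at hw
    have hc : ¬ Cmp x y u w := fun h => hw ⟨hD w, h⟩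
    refine (Set.ncard_pos (Set.toFinite _)).2 ⟨Ln x y u w, ⟨u, w, ?_, rfl⟩, ?_⟩
    · rintro rfl; exact hc (by simp [Cmp])
    · have k1 := hlow w
      have k2 := C.left w
      clear hw
      simp only [Ln, Set.mem_ofPred_eq, Bx, Cmp, U] at *
      grind
  have cov : (Set.univ : Set ι) ⊆ {p} ∪ ({z | ∃ l, IsV x y p z l} ∪ ({z | ∃ l, IsH x y p z l} ∪
      ({z | Core x y p z} ∪ {z | NonMin x y p z ∨ NonMin x (ny y) p z}))) := by
    intro z _
    by_cases hp : z = p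
    · exact Or.inl hp
    right
    by_cases hnm : NonMin x y p z ∨ NonMin x (ny y) p z
    · exact Or.inr (Or.inr (Or.inr hnm))
    push Not at hnm
    rcases (C.left z).eq_or_lt with hx | hx
    · refine Or.inl ⟨_, hx.symm, ?_, rfl⟩
      exact lt_of_le_of_ne (hlow z) fun h => hp (C.inj _ _ hx h).symm
    rcases (hlow z).eq_or_lt with hy | hy
    · exact Or.inr (Or.inl ⟨_, hx, hy.symm, rfl⟩)
    · exact Or.inr (Or.inr (Or.inl ⟨⟨hx, hy⟩, hnm.1⟩))
  have d0 := Set.ncard_le_ncard cov (Set.toFinite _)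
  rw [Set.ncard_univ] at d0
  have d1 := d0.trans (Set.ncard_union_le _ _)
  have d2 := Set.ncard_union_le {z | ∃ l, IsV x y p z l} ({z | ∃ l, IsH x y p z l} ∪
      ({z | Core x y p z} ∪ {z | NonMin x y p z ∨ NonMin x (ny y) p z}))
  have d3 := Set.ncard_union_le {z | ∃ l, IsH x y p z l}
      ({z | Core x y p z} ∪ {z | NonMin x y p z ∨ NonMin x (ny y) p z})
  have d4 := Set.ncard_union_le {z | Core x y p z} {z | NonMin x y p z ∨ NonMin x (ny y) p z}
  rw [Set.ncard_singleton] at d1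
  omega

theorem main_abstract [Finite ι] (x y : ι → ℝ) (inj : ∀ a b, x a = x b → y a = y b → a = b)
    (nu : ∀ u v, u ≠ v → ∃ w, w ∉ Ln x y u v) (h2 : 2 ≤ Nat.card ι) :
    Nat.card ι ≤ 2 * (Lns x y).ncard := by
  have : Nontrivial ι := Finite.one_lt_card_iff_nontrivial.1 (by omega)
  obtain ⟨p0, hp0⟩ := Finite.exists_min x
  obtain ⟨p, hp, hpm⟩ := Set.exists_min_image {v | x v = x p0} y (Set.toFinite _) ⟨p0, rfl⟩
  obtain ⟨q, hq, hqm⟩ := Set.exists_max_image {v | x v = x p0} y (Set.toFinite _) ⟨p0, rfl⟩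
  have hp : x p = x p0 := hp
  have hq : x q = x p0 := hq
  have Cp : Cfg x y p := ⟨inj, nu, fun w => by rw [hp]; exact hp0 w⟩
  have Cq : Cfg x y q := ⟨inj, nu, fun w => by rw [hq]; exact hp0 w⟩
  by_cases h1 : ∀ w, y p ≤ y w
  · exact corner_case Cp h1 h2
  by_cases h3 : ∀ w, y w ≤ y q
  · rw [← Lns_ny]
    exact corner_case Cq.neg (fun w => by simpa [ny] using h3 w) h2
  push Not at h1 h3
  obtain ⟨d, hd⟩ := h1
  obtain ⟨u, hu⟩ := h3
  refine general_case Cp ⟨d, U_ny.2 ⟨lt_of_le_of_ne (Cp.left d) ?_, hd⟩⟩ ?_ ?_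
  · intro e
    exact absurd (hpm d (e.symm.trans hp)) (not_le.2 hd)
  · intro v hv
    have h5 : y v ≤ y q := hqm v (hv.trans hp)
    refine ⟨u, ⟨lt_of_le_of_ne (Cp.left u) ?_, ?_⟩, h5.trans hu.le⟩
    · intro e
      exact absurd (hqm u (e.symm.trans hp)) (not_le.2 hu)
    · exact lt_of_le_of_lt (hpm q hq) hu
  · intro v hv
    exact hpm v (hv.trans hp)

theorem abs_btw (a b c : ℝ) : |a - b| + |b - c| = |a - c| ↔
    (a ≤ b ∧ b ≤ c) ∨ (c ≤ b ∧ b ≤ a) := by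
  rcases abs_cases (a - b) with h1 | h1 <;> rcases abs_cases (b - c) with h2 | h2 <;>
    rcases abs_cases (a - c) with h3 | h3 <;> grind

theorem rho_iff (u z v : ℝ × ℝ) : rho u v = rho u z + rho z v ↔
    Bx (fun a : ℝ × ℝ => a.1) (fun a => a.2) u z v := by
  simp only [Bx, ← abs_btw, rho]
  have h1 := abs_sub_le u.1 z.1 v.1
  have h2 := abs_sub_le u.2 z.2 v.2
  constructor
  · intro h; constructor <;> linarith
  · rintro ⟨h3, h4⟩; linarith

theorem mem_line (X : Finset (ℝ × ℝ)) (u v a : {a // a ∈ X}) (h : u ≠ v) :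
    a.1 ∈ lineThrough X u.1 v.1 ↔ a ∈ Ln (fun a : {a // a ∈ X} => a.1.1) (fun a => a.1.2) u v := by
  have hne : u.1 ≠ v.1 := fun e => h (Subtype.ext e)
  have e : a ∈ Ln (fun a : {a // a ∈ X} => a.1.1) (fun a => a.1.2) u v ↔
    a.1 ∈ Ln (fun a : ℝ × ℝ => a.1) (fun a => a.2) u.1 v.1 := Iff.rfl
  rw [e]
  simp only [lineThrough, Finset.mem_filter, a.2, true_and, MBtw, Ln, Set.mem_ofPred_eq, rho_iff]
  by_cases h1 : a.1 = u.1
  · simp only [h1, true_or, true_iff]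
    exact p_mem_base (x := fun a : ℝ × ℝ => a.1) (y := fun a => a.2) v.1
  by_cases h2 : a.1 = v.1
  · simp only [h2, true_or, or_true, true_iff]
    have := p_mem_base (x := fun a : ℝ × ℝ => a.1) (y := fun a => a.2) (p := v.1) u.1
    rw [Ln_comm] at this
    exact this
  simp only [h1, h2, false_or, ne_eq, hne, not_false_eq_true, true_and, Ne.symm h1, Ne.symm h2]

end L1M

/-- A non-collinear set of `n ≥ 2` points in the plane with the L1 metric
induces at least `⌈n/2⌉` lines. -/
theorem L1_many_lines (X : Finset (ℝ × ℝ)) (n : ℕ) (hn : X.card = n) (h2 : 2 ≤ n)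
    (huniv : ∀ u ∈ X, ∀ v ∈ X, u ≠ v → lineThrough X u v ≠ X) :
    (n + 1) / 2 ≤ numLines X := by
  have hc : Nat.card {a // a ∈ X} = n := by simp [hn]
  have key := L1M.main_abstract (fun a : {a // a ∈ X} => a.1.1) (fun a => a.1.2)
    (fun a b h1 h2 => Subtype.ext (Prod.ext h1 h2))
    (by
      intro u v huv
      by_contra hcon
      push Not at hcon
      refine huniv u.1 u.2 v.1 v.2 (fun e => huv (Subtype.ext e)) ?_
      ext a
      constructor
      · intro h; exact (Finset.mem_filter.1 h).1
      · intro h; exact (L1M.mem_line X u v ⟨a, h⟩ huv).2 (hcon _))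
    (by omega)
  rw [hc] at key
  have hle : (L1M.Lns (fun a : {a // a ∈ X} => a.1.1) (fun a => a.1.2)).ncard ≤ numLines X := by
    unfold numLines
    rw [← Set.ncard_coe_finset]
    refine le_trans (Set.ncard_le_ncard ?_ (Set.toFinite _)) (Set.ncard_image_le
      (f := fun F : Finset (ℝ × ℝ) => {a : {a // a ∈ X} | a.1 ∈ F}) (Set.toFinite _))
    rintro l ⟨u, v, huv, rfl⟩
    refine ⟨lineThrough X u.1 v.1, ?_, ?_⟩
    · rw [Finset.mem_coe, Finset.mem_image]
      refine ⟨(u.1, v.1), ?_, rfl⟩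
      simp only [Finset.mem_filter, Finset.mem_product]
      exact ⟨⟨u.2, v.2⟩, fun e => huv (Subtype.ext e)⟩
    · ext a
      exact L1M.mem_line X u v a huv
  omega
end
end

section
/- Let X be a finite set of points in ℝ² with the L1 metric. If {p,q} and {a,b} are increasing pairs of points of X inducing the same line, ⟨p,q⟩ = ⟨a,b⟩, then any two of the four points p, q, a, b are comparable in the partial order ≤_I. -/
noncomputable section
open Classical

/-- `X` is non-collinear: no line induced by two distinct points of `X` equals `X`. -/
def NonCollinear (X : Finset (ℝ × ℝ)) : Prop :=
  ∀ u ∈ X, ∀ v ∈ X, u ≠ v → lineThrough X u v ≠ X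

/-- `{p,q}` is an increasing pair. -/
def IncPair (p q : ℝ × ℝ) : Prop := 0 < (q.1 - p.1) * (q.2 - p.2)

/-- `{p,q}` is a decreasing pair. -/
def DecPair (p q : ℝ × ℝ) : Prop := (q.1 - p.1) * (q.2 - p.2) < 0

/-- The partial order `≤_I`. -/
def leI (c d : ℝ × ℝ) : Prop := c.1 ≤ d.1 ∧ c.2 ≤ d.2

/-- `c <_I d`. -/
def ltI (c d : ℝ × ℝ) : Prop := leI c d ∧ c ≠ d

/-- The partial order `≤_D`. -/
def leD (c d : ℝ × ℝ) : Prop := c.1 ≤ d.1 ∧ d.2 ≤ c.2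

/-- `c <_D d`. -/
def ltD (c d : ℝ × ℝ) : Prop := leD c d ∧ c ≠ d

/-- `(p,q)` is a blue arrow of `X`. -/
def BlueArrow (X : Finset (ℝ × ℝ)) (p q : ℝ × ℝ) : Prop :=
  p ∈ X ∧ q ∈ X ∧ IncPair p q ∧ ltI p q ∧
  ∀ a b, a ∈ X → b ∈ X → IncPair a b → ltI a b →
    lineThrough X a b = lineThrough X p q → (ltI q b ∨ (q = b ∧ leI a p))

/-- `(p,q)` is a red arrow of `X`. -/
def RedArrow (X : Finset (ℝ × ℝ)) (p q : ℝ × ℝ) : Prop :=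
  p ∈ X ∧ q ∈ X ∧ DecPair p q ∧ ltD p q ∧
  ∀ a b, a ∈ X → b ∈ X → DecPair a b → ltD a b →
    lineThrough X a b = lineThrough X p q → (ltD q b ∨ (q = b ∧ leD a p))

/-- An arrow is a blue or a red arrow. -/
def Arrow (X : Finset (ℝ × ℝ)) (p q : ℝ × ℝ) : Prop :=
  BlueArrow X p q ∨ RedArrow X p q

/-- `a` is not an endpoint of any arrow of `X`. -/
def NotEndpoint (X : Finset (ℝ × ℝ)) (a : ℝ × ℝ) : Prop :=
  ∀ p q, Arrow X p q → a ≠ p ∧ a ≠ q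

lemma coord_between {r s t u v w : ℝ}
    (h : |r - t| + |u - w| = (|r - s| + |u - v|) + (|s - t| + |v - w|)) :
    ((r ≤ s ∧ s ≤ t) ∨ (t ≤ s ∧ s ≤ r)) ∧ ((u ≤ v ∧ v ≤ w) ∨ (w ≤ v ∧ v ≤ u)) := by
  have h1 := abs_sub_le r s t
  have h2 := abs_sub_le u v w
  have key : ∀ r s t : ℝ, |r - t| = |r - s| + |s - t| →
      ((r ≤ s ∧ s ≤ t) ∨ (t ≤ s ∧ s ≤ r)) := by
    intro r s t h
    rcases le_total r s with h1 | h1 <;> rcases le_total s t with h2 | h2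
    · exact Or.inl ⟨h1, h2⟩
    · rw [abs_of_nonpos (sub_nonpos.2 h1), abs_of_nonneg (sub_nonneg.2 h2)] at h
      rcases abs_cases (r - t) with h3 | h3
      · right; constructor <;> linarith
      · left; constructor <;> linarith
    · rw [abs_of_nonneg (sub_nonneg.2 h1), abs_of_nonpos (sub_nonpos.2 h2)] at h
      rcases abs_cases (r - t) with h3 | h3
      · right; constructor <;> linarith
      · left; constructor <;> linarith
    · exact Or.inr ⟨h2, h1⟩
  exact ⟨key _ _ _ (by linarith), key _ _ _ (by linarith)⟩

lemma incPair_cases {p q : ℝ × ℝ} (h : IncPair p q) :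
    (p.1 < q.1 ∧ p.2 < q.2) ∨ (q.1 < p.1 ∧ q.2 < p.2) := by
  rcases mul_pos_iff.1 h with h | h
  · left; constructor <;> linarith [h.1, h.2]
  · right; constructor <;> linarith [h.1, h.2]

lemma line_comparable {X : Finset (ℝ × ℝ)} {p q z : ℝ × ℝ} (h : IncPair p q)
    (hz : z ∈ lineThrough X p q) : (leI z p ∨ leI p z) ∧ (leI z q ∨ leI q z) := by
  have hc := incPair_cases h
  unfold leI
  rcases (Finset.mem_filter.1 hz).2 with rfl | rfl | h | h | h
  · grind
  · grind
  all_goals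
    have := coord_between h.2.2.2
    clear h hz
    grind

/-- If two increasing pairs of points of `X` induce the same line, then any two
of the four points are comparable in `≤_I`. -/
theorem increasing_pairs_same_line_comparable (X : Finset (ℝ × ℝ)) (p q a b : ℝ × ℝ)
    (hp : p ∈ X) (hq : q ∈ X) (ha : a ∈ X) (hb : b ∈ X)
    (hpq : IncPair p q) (hab : IncPair a b)
    (hline : lineThrough X p q = lineThrough X a b) :
    ∀ u ∈ ({p, q, a, b} : Set (ℝ × ℝ)), ∀ v ∈ ({p, q, a, b} : Set (ℝ × ℝ)),
      leI u v ∨ leI v u := by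
  have hpl := line_comparable (X := X) (z := p) hpq (by simp [lineThrough, hp])
  have habl := line_comparable (X := X) (z := a) hab (by simp [lineThrough, ha])
  have h1 := line_comparable (z := a) hpq (by rw [hline]; simp [lineThrough, ha])
  have h2 := line_comparable (z := b) hpq (by rw [hline]; simp [lineThrough, hb])
  have refl : ∀ u, leI u u := fun u => ⟨le_rfl, le_rfl⟩
  intro u hu v hv
  simp only [Set.mem_insert_iff, Set.mem_singleton_iff] at hu hv
  rcases hu with rfl | rfl | rfl | rfl <;> rcases hv with rfl | rfl | rfl | rfl <;>
    first
    | exact Or.inl (refl _)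
    | exact hpl.2
    | exact hpl.2.symm
    | exact habl.2
    | exact habl.2.symm
    | exact h1.1
    | exact h1.1.symm
    | exact h1.2
    | exact h1.2.symm
    | exact h2.1
    | exact h2.1.symm
    | exact h2.2
    | exact h2.2.symm
end
end

section
/- Let X be a finite set of points in ℝ² with the L1 metric. Suppose X is non-collinear. If a ∈ X is not an endpoint of any arrow, then either the second quadrant of a or the third quadrant of a contains no points of X. -/
noncomputable section
open Classical

lemma abs_tight {u z v : ℝ} (h : u ≤ v) : |u - v| = |u - z| + |z - v| ↔ u ≤ z ∧ z ≤ v := by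
  rw [abs_of_nonpos (by linarith : u - v ≤ 0)]
  constructor
  · intro e
    rcases abs_cases (u - z) with ⟨h1, h2⟩ | ⟨h1, h2⟩ <;>
    rcases abs_cases (z - v) with ⟨h3, h4⟩ | ⟨h3, h4⟩ <;>
    constructor <;> linarith
  · rintro ⟨h1, h2⟩
    rw [abs_of_nonpos (by linarith : u - z ≤ 0), abs_of_nonpos (by linarith : z - v ≤ 0)]
    ring

lemma abs_tight' {u z v : ℝ} (h : v ≤ u) : |u - v| = |u - z| + |z - v| ↔ v ≤ z ∧ z ≤ u := by
  rw [abs_sub_comm u v, abs_sub_comm u z, abs_sub_comm z v, add_comm, abs_tight h]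

lemma abs_tri (u z v : ℝ) : |u - v| ≤ |u - z| + |z - v| := abs_sub_le u z v

lemma rho_tight (u z v : ℝ × ℝ) : rho u v = rho u z + rho z v ↔
    |u.1 - v.1| = |u.1 - z.1| + |z.1 - v.1| ∧ |u.2 - v.2| = |u.2 - z.2| + |z.2 - v.2| := by
  unfold rho
  have h1 := abs_tri u.1 z.1 v.1
  have h2 := abs_tri u.2 z.2 v.2
  constructor
  · intro h; constructor <;> linarith
  · rintro ⟨h, h'⟩; linarith

lemma abs_tight_cases {u z v : ℝ} (e : |u - v| = |u - z| + |z - v|) :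
    (u ≤ z ∧ z ≤ v) ∨ (v ≤ z ∧ z ≤ u) := by
  rcases le_total u v with h | h
  · exact Or.inl ((abs_tight h).1 e)
  · exact Or.inr ((abs_tight' h).1 e)

lemma strictD {p q : ℝ × ℝ} (h : DecPair p q) (h' : ltD p q) : p.1 < q.1 ∧ q.2 < p.2 := by
  obtain ⟨⟨h1, h2⟩, -⟩ := h'
  unfold DecPair at h
  constructor
  · rcases h1.lt_or_eq with h3 | h3
    · exact h3
    · rw [h3] at h; simp at h
  · rcases h2.lt_or_eq with h3 | h3
    · exact h3
    · rw [h3] at h; simp at h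

lemma ofStrictD {p q : ℝ × ℝ} (h1 : p.1 < q.1) (h2 : q.2 < p.2) : DecPair p q ∧ ltD p q := by
  refine ⟨?_, ⟨h1.le, h2.le⟩, ?_⟩
  · unfold DecPair; nlinarith
  · rintro rfl; exact lt_irrefl _ h1

lemma mem_lineD {X : Finset (ℝ × ℝ)} {p q z : ℝ × ℝ} (h1 : p.1 < q.1) (h2 : q.2 < p.2) :
    z ∈ lineThrough X p q ↔ z ∈ X ∧ (leD z p ∨ (leD p z ∧ leD z q) ∨ leD q z) := by
  unfold lineThrough
  rw [Finset.mem_filter]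
  refine and_congr_right fun _ => ?_
  constructor
  · rintro (rfl | rfl | ⟨-, -, -, h⟩ | ⟨-, -, -, h⟩ | ⟨-, -, -, h⟩)
    · exact Or.inl ⟨le_rfl, le_rfl⟩
    · exact Or.inr (Or.inr ⟨le_rfl, le_rfl⟩)
    all_goals
      rw [rho_tight] at h
      obtain ⟨ha, hb⟩ := h
      have ha := abs_tight_cases ha
      have hb := abs_tight_cases hb
      unfold leD
      grind
  · have hpq : p ≠ q := by rintro rfl; exact lt_irrefl _ h1
    intro h
    by_cases hp : z = p
    · exact Or.inl hp
    by_cases hq : z = q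
    · exact Or.inr (Or.inl hq)
    right; right
    rcases h with ⟨h3, h4⟩ | ⟨⟨h3, h4⟩, h5, h6⟩ | ⟨h3, h4⟩
    · right; left
      refine ⟨hp, hpq, hq, (rho_tight _ _ _).2 ⟨?_, ?_⟩⟩
      · exact (abs_tight (by linarith)).2 ⟨h3, h1.le⟩
      · exact (abs_tight' (by linarith)).2 ⟨h2.le, h4⟩
    · left
      refine ⟨fun e => hp e.symm, hq, hpq, (rho_tight _ _ _).2 ⟨?_, ?_⟩⟩
      · exact (abs_tight (by linarith)).2 ⟨h3, h5⟩
      · exact (abs_tight' (by linarith)).2 ⟨h6, h4⟩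
    · right; right
      refine ⟨hpq, fun e => hq e.symm, fun e => hp e.symm, (rho_tight _ _ _).2 ⟨?_, ?_⟩⟩
      · exact (abs_tight (by linarith)).2 ⟨h1.le, h3⟩
      · exact (abs_tight' (by linarith)).2 ⟨h4, h2.le⟩

/-- Membership in a line from coordinatewise betweenness, up to the degenerate cases. -/
lemma mem_line_of {X : Finset (ℝ × ℝ)} {u v z : ℝ × ℝ} (hz : z ∈ X) (huv : u ≠ v)
    (h : rho u v = rho u z + rho z v ∨ rho z v = rho z u + rho u v ∨
      rho u z = rho u v + rho v z) : z ∈ lineThrough X u v := by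
  unfold lineThrough
  rw [Finset.mem_filter]
  refine ⟨hz, ?_⟩
  by_cases hp : z = u
  · exact Or.inl hp
  by_cases hq : z = v
  · exact Or.inr (Or.inl hq)
  right; right
  rcases h with h | h | h
  · exact Or.inl ⟨fun e => hp e.symm, hq, huv, h⟩
  · exact Or.inr (Or.inl ⟨hp, huv, hq, h⟩)
  · exact Or.inr (Or.inr ⟨huv, fun e => hq e.symm, fun e => hp e.symm, h⟩)

lemma line_subset {X : Finset (ℝ × ℝ)} {u v : ℝ × ℝ} : lineThrough X u v ⊆ X := by
  unfold lineThrough; exact Finset.filter_subset _ _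

lemma noncol {X : Finset (ℝ × ℝ)} (hnc : NonCollinear X) {u v : ℝ × ℝ} (hu : u ∈ X) (hv : v ∈ X)
    (huv : u ≠ v) : ∃ z ∈ X, z ∉ lineThrough X u v := by
  by_contra! h
  exact hnc u hu v hv huv (Finset.Subset.antisymm line_subset h)

lemma horiz {X : Finset (ℝ × ℝ)} (hnc : NonCollinear X) {u v : ℝ × ℝ} (hu : u ∈ X) (hv : v ∈ X)
    (h1 : u.1 < v.1) (h2 : u.2 = v.2) : ∃ z ∈ X, u.1 < z.1 ∧ z.1 < v.1 ∧ z.2 ≠ v.2 := by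
  have huv : u ≠ v := by rintro rfl; exact lt_irrefl _ h1
  obtain ⟨z, hz, hn⟩ := noncol hnc hu hv huv
  refine ⟨z, hz, ?_⟩
  by_contra! hc
  apply hn
  apply mem_line_of hz huv
  simp only [rho_tight, h2]
  by_cases h3 : z.1 ≤ u.1
  · right; left
    exact ⟨(abs_tight (by linarith)).2 ⟨h3, h1.le⟩, by simp⟩
  by_cases h4 : v.1 ≤ z.1
  · right; right
    exact ⟨(abs_tight (by linarith)).2 ⟨h1.le, h4⟩, by simp⟩
  left
  have h5 := hc (by linarith) (by linarith)
  exact ⟨(abs_tight (by linarith)).2 ⟨by linarith, by linarith⟩, by simp [h5]⟩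

lemma vert {X : Finset (ℝ × ℝ)} (hnc : NonCollinear X) {u v : ℝ × ℝ} (hu : u ∈ X) (hv : v ∈ X)
    (h1 : u.2 < v.2) (h2 : u.1 = v.1) : ∃ z ∈ X, u.2 < z.2 ∧ z.2 < v.2 ∧ z.1 ≠ v.1 := by
  have huv : u ≠ v := by rintro rfl; exact lt_irrefl _ h1
  obtain ⟨z, hz, hn⟩ := noncol hnc hu hv huv
  refine ⟨z, hz, ?_⟩
  by_contra! hc
  apply hn
  apply mem_line_of hz huv
  simp only [rho_tight, h2]
  by_cases h3 : z.2 ≤ u.2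
  · right; left
    exact ⟨by simp, (abs_tight (by linarith)).2 ⟨h3, h1.le⟩⟩
  by_cases h4 : v.2 ≤ z.2
  · right; right
    exact ⟨by simp, (abs_tight (by linarith)).2 ⟨h1.le, h4⟩⟩
  left
  have h5 := hc (by linarith) (by linarith)
  exact ⟨by simp [h5], (abs_tight (by linarith)).2 ⟨by linarith, by linarith⟩⟩

/-- Every decreasing line has a red arrow. -/
lemma exists_red {X : Finset (ℝ × ℝ)} {d a : ℝ × ℝ} (hd : d ∈ X) (ha : a ∈ X)
    (h1 : d.1 < a.1) (h2 : a.2 < d.2) :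
    ∃ r s, RedArrow X r s ∧ lineThrough X d a = lineThrough X r s := by
  let S := (X ×ˢ X).filter fun w => DecPair w.1 w.2 ∧ ltD w.1 w.2 ∧
    lineThrough X w.1 w.2 = lineThrough X d a
  have hmem : ∀ w, w ∈ S ↔ (w.1 ∈ X ∧ w.2 ∈ X) ∧ DecPair w.1 w.2 ∧ ltD w.1 w.2 ∧
    lineThrough X w.1 w.2 = lineThrough X d a := by
    intro w; simp only [S, Finset.mem_filter, Finset.mem_product]
  have hS : (d, a) ∈ S := (hmem _).2 ⟨⟨hd, ha⟩, (ofStrictD h1 h2).1, (ofStrictD h1 h2).2, rfl⟩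
  obtain ⟨w0, hw0, hmin⟩ := S.exists_min_image (fun w => w.2.1 - w.2.2) ⟨_, hS⟩
  let T := S.filter fun w => w.2 = w0.2
  have hT : w0 ∈ T := Finset.mem_filter.2 ⟨hw0, rfl⟩
  obtain ⟨w, hw, hmax⟩ := T.exists_max_image (fun w => w.1.1 - w.1.2) ⟨_, hT⟩
  obtain ⟨hwS, hw2⟩ := Finset.mem_filter.1 hw
  obtain ⟨⟨hr, hs⟩, hdec, hlt, hline⟩ := (hmem _).1 hwS
  refine ⟨w.1, w.2, ⟨hr, hs, hdec, hlt, ?_⟩, hline.symm⟩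
  intro u v hu hv hduv huv hl
  have huvS : (u, v) ∈ S := (hmem _).2 ⟨⟨hu, hv⟩, hduv, huv, hl.trans hline⟩
  obtain ⟨k1, k2⟩ := strictD hdec hlt
  obtain ⟨l1, l2⟩ := strictD hduv huv
  have hmv : v ∈ lineThrough X w.1 w.2 := by
    rw [← hl, mem_lineD l1 l2]; exact ⟨hv, Or.inr (Or.inr ⟨le_rfl, le_rfl⟩)⟩
  have hmu : u ∈ lineThrough X w.1 w.2 := by
    rw [← hl, mem_lineD l1 l2]; exact ⟨hu, Or.inl ⟨le_rfl, le_rfl⟩⟩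
  rw [mem_lineD k1 k2] at hmv hmu
  have m1 := hmin _ huvS
  simp only [← hw2] at m1
  by_cases hv2 : w.2 = v
  · right
    refine ⟨hv2, ?_⟩
    have m2 := hmax _ (Finset.mem_filter.2 ⟨huvS, by simp [← hv2, hw2]⟩)
    simp only at m2
    obtain ⟨-, h⟩ := hmu
    unfold leD at *
    grind
  · left
    refine ⟨?_, hv2⟩
    have : ¬ (w.2.1 = v.1 ∧ w.2.2 = v.2) := fun h => hv2 (Prod.ext h.1 h.2)
    obtain ⟨-, h⟩ := hmv
    unfold leD at *
    grind

/-- The half of the argument where the rightmost point is in the third quadrant. -/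
lemma core {X : Finset (ℝ × ℝ)} {a c d0 : ℝ × ℝ} (hnc : NonCollinear X) (haX : a ∈ X)
    (hiso : NotEndpoint X a) (hc : c ∈ X) (hc1 : c.1 < a.1) (hc2 : c.2 < a.2)
    (hmax : ∀ z ∈ X, z.1 < a.1 → z.2 ≠ a.2 → z.1 ≤ c.1)
    (hd0 : d0 ∈ X) (hd1 : d0.1 < a.1) (hd2 : a.2 < d0.2) : False := by
  let S := X.filter fun z => z.1 < a.1 ∧ a.2 < z.2
  obtain ⟨d, hdS, hmin⟩ := S.exists_min_image (fun z => z.2)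
    ⟨d0, Finset.mem_filter.2 ⟨hd0, hd1, hd2⟩⟩
  obtain ⟨hd, d1, d2⟩ := Finset.mem_filter.1 hdS
  obtain ⟨r, s, hrs, hl⟩ := exists_red hd haX d1 d2
  have hsa : a ≠ s := (hiso r s (Or.inr hrs)).2
  obtain ⟨hr, hs, hdec, hlt, harr⟩ := hrs
  obtain ⟨k1, k2⟩ := strictD hdec hlt
  have hsa' : leD s a := by
    rcases harr d a hd haX (ofStrictD d1 d2).1 (ofStrictD d1 d2).2 hl with h | h
    · exact h.1
    · exact absurd h.1.symm hsa
  have key : ∀ z ∈ X, (leD z d ∨ (leD d z ∧ leD z a) ∨ leD a z) ↔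
      (leD z r ∨ (leD r z ∧ leD z s) ∨ leD s z) := by
    intro z hz
    have e1 := mem_lineD (X := X) (z := z) d1 d2
    have e2 := mem_lineD (X := X) (z := z) k1 k2
    rw [hl, e2] at e1
    simpa [hz] using e1.symm
  have hcs : c.1 < s.1 := by
    have := key c hc
    unfold leD at *
    grind
  have hdc := hmax d hd d1 (ne_of_gt d2)
  have hsd : s.2 ≤ d.2 := by
    have := key s hs
    unfold leD at *
    grind
  obtain ⟨s1, s2⟩ := hsa'
  rcases s1.lt_or_eq with s1 | s1
  · have s2' : s.2 = a.2 := by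
      by_contra h
      have := hmax s hs s1 h
      linarith
    obtain ⟨z, hz, z1, z2, z3⟩ := horiz hnc hs haX s1 s2'
    have := hmax z hz z2 z3
    linarith
  · rcases s2.lt_or_eq with s2 | s2
    · obtain ⟨z, hz, z1, z2, z3⟩ := vert hnc haX hs s2 s1.symm
      rcases lt_or_gt_of_ne z3 with z3 | z3
      · have := hmin z (Finset.mem_filter.2 ⟨hz, by linarith, z1⟩)
        linarith
      · have := key z hz
        unfold leD at *
        grind
    · exact hsa (Prod.ext s1.symm s2)

/-- Reflection in the horizontal axis. -/
def mirY (p : ℝ × ℝ) : ℝ × ℝ := (p.1, -p.2)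

lemma mirY_mirY (p : ℝ × ℝ) : mirY (mirY p) = p := by simp [mirY]

lemma mirY_inj {p q : ℝ × ℝ} : mirY p = mirY q ↔ p = q :=
  ⟨fun h => by rw [← mirY_mirY p, h, mirY_mirY], fun h => by rw [h]⟩

lemma rho_flip (p q : ℝ × ℝ) : rho (mirY p) (mirY q) = rho p q := by
  simp only [rho, mirY]
  rw [show -p.2 - -q.2 = -(p.2 - q.2) by ring, abs_neg]

lemma mbtw_flip (u z v : ℝ × ℝ) : MBtw (mirY u) (mirY z) (mirY v) ↔ MBtw u z v := by
  simp only [MBtw, rho_flip, ne_eq, mirY_inj]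

lemma mem_flip {X : Finset (ℝ × ℝ)} {z : ℝ × ℝ} : z ∈ X.image mirY ↔ mirY z ∈ X := by
  rw [Finset.mem_image]
  constructor
  · rintro ⟨w, hw, rfl⟩; rwa [mirY_mirY]
  · intro h; exact ⟨_, h, mirY_mirY z⟩

lemma line_flip (X : Finset (ℝ × ℝ)) (u v : ℝ × ℝ) :
    lineThrough (X.image mirY) (mirY u) (mirY v) = (lineThrough X u v).image mirY := by
  ext z
  obtain ⟨w, rfl⟩ : ∃ w, z = mirY w := ⟨mirY z, (mirY_mirY z).symm⟩
  rw [mem_flip, mirY_mirY]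
  simp only [lineThrough, Finset.mem_filter, mem_flip, mirY_mirY, mbtw_flip, mirY_inj]

lemma inc_flip (p q : ℝ × ℝ) : IncPair (mirY p) (mirY q) ↔ DecPair p q := by
  simp only [IncPair, DecPair, mirY]
  constructor <;> intro h <;> nlinarith

lemma dec_flip (p q : ℝ × ℝ) : DecPair (mirY p) (mirY q) ↔ IncPair p q := by
  simp only [IncPair, DecPair, mirY]
  constructor <;> intro h <;> nlinarith

lemma leI_flip (p q : ℝ × ℝ) : leI (mirY p) (mirY q) ↔ leD p q := by
  simp [leI, leD, mirY]

lemma leD_flip (p q : ℝ × ℝ) : leD (mirY p) (mirY q) ↔ leI p q := by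
  simp [leI, leD, mirY]

lemma ltI_flip (p q : ℝ × ℝ) : ltI (mirY p) (mirY q) ↔ ltD p q := by
  simp only [ltI, ltD, leI_flip, ne_eq, mirY_inj]

lemma ltD_flip (p q : ℝ × ℝ) : ltD (mirY p) (mirY q) ↔ ltI p q := by
  simp only [ltI, ltD, leD_flip, ne_eq, mirY_inj]

lemma arrow_flip {X : Finset (ℝ × ℝ)} {p q : ℝ × ℝ}
    (h : Arrow (X.image mirY) (mirY p) (mirY q)) : Arrow X p q := by
  rcases h with ⟨h1, h2, h3, h4, h5⟩ | ⟨h1, h2, h3, h4, h5⟩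
  · right
    rw [mem_flip, mirY_mirY] at h1 h2
    rw [inc_flip] at h3
    rw [ltI_flip] at h4
    refine ⟨h1, h2, h3, h4, fun u v hu hv huv hlt hl => ?_⟩
    have := h5 (mirY u) (mirY v) (by rwa [mem_flip, mirY_mirY]) (by rwa [mem_flip, mirY_mirY])
      ((inc_flip _ _).2 huv) ((ltI_flip _ _).2 hlt) (by rw [line_flip, line_flip, hl])
    rwa [ltI_flip, leI_flip, mirY_inj] at this
  · left
    rw [mem_flip, mirY_mirY] at h1 h2
    rw [dec_flip] at h3
    rw [ltD_flip] at h4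
    refine ⟨h1, h2, h3, h4, fun u v hu hv huv hlt hl => ?_⟩
    have := h5 (mirY u) (mirY v) (by rwa [mem_flip, mirY_mirY]) (by rwa [mem_flip, mirY_mirY])
      ((dec_flip _ _).2 huv) ((ltD_flip _ _).2 hlt) (by rw [line_flip, line_flip, hl])
    rwa [ltD_flip, leD_flip, mirY_inj] at this

lemma notEndpoint_flip {X : Finset (ℝ × ℝ)} {a : ℝ × ℝ} (h : NotEndpoint X a) :
    NotEndpoint (X.image mirY) (mirY a) := by
  intro p q hpq
  rw [← mirY_mirY p, ← mirY_mirY q] at hpq ⊢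
  have := h _ _ (arrow_flip hpq)
  simpa only [ne_eq, mirY_inj] using this

lemma nonCollinear_flip {X : Finset (ℝ × ℝ)} (h : NonCollinear X) :
    NonCollinear (X.image mirY) := by
  intro u hu v hv huv he
  rw [mem_flip] at hu hv
  refine h _ hu _ hv (fun e => huv (mirY_inj.1 e)) ?_
  rw [← mirY_mirY u, ← mirY_mirY v, line_flip] at he
  exact Finset.image_injective (fun _ _ e => mirY_inj.1 e) he

/-- If `X` is non-collinear and `a ∈ X` is not the endpoint of any arrow, then
the second or the third quadrant of `a` contains no point of `X`. -/
theorem no_arrow_endpoint_empty_quadrant (X : Finset (ℝ × ℝ)) (a : ℝ × ℝ)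
    (hnc : NonCollinear X) (haX : a ∈ X) (hiso : NotEndpoint X a) :
    (∀ z ∈ X, ¬(z.1 < a.1 ∧ a.2 < z.2)) ∨ (∀ z ∈ X, ¬(z.1 < a.1 ∧ z.2 < a.2)) := by
  by_contra hcon
  push Not at hcon
  obtain ⟨⟨d, hd, d1, d2⟩, ⟨e, he, e1, e2⟩⟩ := hcon
  let S := X.filter fun z => z.1 < a.1 ∧ z.2 ≠ a.2
  obtain ⟨c, hcS, hmax⟩ := S.exists_max_image (fun z => z.1)
    ⟨d, Finset.mem_filter.2 ⟨hd, d1, ne_of_gt d2⟩⟩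
  obtain ⟨hc, c1, c2⟩ := Finset.mem_filter.1 hcS
  have hmax' : ∀ z ∈ X, z.1 < a.1 → z.2 ≠ a.2 → z.1 ≤ c.1 := fun z hz h1 h2 =>
    hmax z (Finset.mem_filter.2 ⟨hz, h1, h2⟩)
  rcases lt_or_gt_of_ne c2 with c2 | c2
  · exact core hnc haX hiso hc c1 c2 hmax' hd d1 d2
  · refine core (nonCollinear_flip hnc) (a := mirY a) (c := mirY c) (d0 := mirY e)
      (by rwa [mem_flip, mirY_mirY]) (notEndpoint_flip hiso) (by rwa [mem_flip, mirY_mirY])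
      c1 (by simpa [mirY] using c2) ?_ (by rwa [mem_flip, mirY_mirY]) e1
      (by simpa [mirY] using e2)
    intro z hz h1 h2
    rw [mem_flip] at hz
    refine hmax' (mirY z) hz h1 (fun h => h2 ?_)
    simp only [mirY] at h ⊢
    linarith
end
end

section
/- Suppose the Assumptions hold. Then exactly one of the following four options holds for the placement of t₁ and w₁: (a) t₁ ∈ (x(a),x(d₁))×{y(a)} and w₁ = d₁; (b) t₁ ∈ {x(a)}×(y(d₁),y(a)) and w₁ = d₁; (c) t₁ ∈ {x(a)}×(y(a),∞) and w₁ ∈ (x(a),x(d₁)]×{y(a)}; (d) t₁ ∈ (−∞,x(a))×{y(a)} and w₁ ∈ {x(a)}×[y(d₁),y(a)). Moreover the analogous statement holds for t₂ and w₂ with d₂ in place of d₁. -/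
noncomputable section
open Classical

/-- Option (a): `t ∈ (x(a),x(d))×{y(a)}` and `w = d`. -/
def PlacementA (a d t w : ℝ × ℝ) : Prop :=
  (a.1 < t.1 ∧ t.1 < d.1 ∧ t.2 = a.2) ∧ w = d

/-- Option (b): `t ∈ {x(a)}×(y(d),y(a))` and `w = d`. -/
def PlacementB (a d t w : ℝ × ℝ) : Prop :=
  (t.1 = a.1 ∧ d.2 < t.2 ∧ t.2 < a.2) ∧ w = d

/-- Option (c): `t ∈ {x(a)}×(y(a),∞)` and `w ∈ (x(a),x(d)]×{y(a)}`. -/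
def PlacementC (a d t w : ℝ × ℝ) : Prop :=
  (t.1 = a.1 ∧ a.2 < t.2) ∧ (a.1 < w.1 ∧ w.1 ≤ d.1 ∧ w.2 = a.2)

/-- Option (d): `t ∈ (−∞,x(a))×{y(a)}` and `w ∈ {x(a)}×[y(d),y(a))`. -/
def PlacementD (a d t w : ℝ × ℝ) : Prop :=
  (t.2 = a.2 ∧ t.1 < a.1) ∧ (w.1 = a.1 ∧ d.2 ≤ w.2 ∧ w.2 < a.2)

/-- The four placement options of Lemma 2 (placement). -/
def Placement (a d t w : ℝ × ℝ) : Fin 4 → Prop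
  | 0 => PlacementA a d t w
  | 1 => PlacementB a d t w
  | 2 => PlacementC a d t w
  | 3 => PlacementD a d t w

/-- A point between `u` and `v` has both coordinates between theirs. -/
lemma coords_of_rho {u z v : ℝ × ℝ} (h : rho u v = rho u z + rho z v) :
    |u.1 - v.1| = |u.1 - z.1| + |z.1 - v.1| ∧ |u.2 - v.2| = |u.2 - z.2| + |z.2 - v.2| := by
  have h1 := abs_sub_le u.1 z.1 v.1
  have h2 := abs_sub_le u.2 z.2 v.2
  unfold rho at h
  constructor <;> linarith

/-- One-dimensional betweenness. -/
lemma between_of_abs {u z v : ℝ} (h : |u - v| = |u - z| + |z - v|) :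
    (u ≤ z ∧ z ≤ v) ∨ (v ≤ z ∧ z ≤ u) := by
  rcases abs_cases (u - v) with ⟨h1, _⟩ | ⟨h1, _⟩ <;>
  rcases abs_cases (u - z) with ⟨h2, _⟩ | ⟨h2, _⟩ <;>
  rcases abs_cases (z - v) with ⟨h3, _⟩ | ⟨h3, _⟩ <;>
  first
  | (left; constructor <;> linarith)
  | (right; constructor <;> linarith)

/-- The line through a decreasing pair: upper left quadrant, box, lower right quadrant. -/
lemma mem_line {X : Finset (ℝ × ℝ)} {a d z : ℝ × ℝ} (h1 : a.1 < d.1) (h2 : d.2 < a.2)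
    (hz : z ∈ lineThrough X a d) : leD z a ∨ (leD a z ∧ leD z d) ∨ leD d z := by
  simp only [lineThrough, Finset.mem_filter] at hz
  unfold leD
  rcases hz.2 with rfl | rfl | h | h | h
  · exact Or.inl ⟨le_rfl, le_rfl⟩
  · exact Or.inr (Or.inr ⟨le_rfl, le_rfl⟩)
  all_goals
    obtain ⟨hx, hy⟩ := coords_of_rho h.2.2.2
    have hx := between_of_abs hx
    have hy := between_of_abs hy
  · right; left
    rcases hx with hx | hx <;> rcases hy with hy | hy <;>
      refine ⟨⟨?_, ?_⟩, ?_, ?_⟩ <;> linarith [hx.1, hx.2, hy.1, hy.2]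
  · left
    rcases hx with hx | hx <;> rcases hy with hy | hy <;>
      refine ⟨?_, ?_⟩ <;> linarith [hx.1, hx.2, hy.1, hy.2]
  · right; right
    rcases hx with hx | hx <;> rcases hy with hy | hy <;>
      refine ⟨?_, ?_⟩ <;> linarith [hx.1, hx.2, hy.1, hy.2]

lemma left_mem_line {X : Finset (ℝ × ℝ)} {u v : ℝ × ℝ} (h : u ∈ X) :
    u ∈ lineThrough X u v := by simp [lineThrough, h]

lemma right_mem_line {X : Finset (ℝ × ℝ)} {u v : ℝ × ℝ} (h : v ∈ X) :
    v ∈ lineThrough X u v := by simp [lineThrough, h]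

/-- The four options are pairwise exclusive. -/
lemma placement_unique {a d t w : ℝ × ℝ}
    (i j : Fin 4) (hi : Placement a d t w i) (hj : Placement a d t w j) : i = j := by
  fin_cases i <;> fin_cases j <;> first | rfl | exfalso
  all_goals
    simp only [Placement, PlacementA, PlacementB, PlacementC, PlacementD] at hi hj
    obtain ⟨hi1, hi2⟩ := hi
    obtain ⟨hj1, hj2⟩ := hj
    grind

/-- The common core of both halves: it only uses that the box between `a` and `d` minus its
sides through `a` contains only `d`. -/
lemma placement_core (X : Finset (ℝ × ℝ)) (a d t w : ℝ × ℝ)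
    (haX : a ∈ X) (hiso : NotEndpoint X a)
    (hQ2 : ∀ z ∈ X, ¬(z.1 < a.1 ∧ a.2 < z.2))
    (hdX : d ∈ X) (hd : a.1 < d.1 ∧ d.2 < a.2)
    (hbox : ∀ z ∈ X, a.1 < z.1 → z.1 ≤ d.1 → d.2 ≤ z.2 → z.2 < a.2 → z = d)
    (ht : RedArrow X t w) (hl : lineThrough X t w = lineThrough X a d) :
    ∃! i : Fin 4, Placement a d t w i := by
  obtain ⟨hx, hy⟩ := hd
  suffices h : ∃ i : Fin 4, Placement a d t w i by
    obtain ⟨i, hi⟩ := h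
    exact ⟨i, hi, fun j hj => placement_unique j i hj hi⟩
  obtain ⟨hat, haw⟩ := hiso t w (Or.inr ht)
  obtain ⟨htX, hwX, hdec, ⟨⟨htw1, htw2⟩, -⟩, hmin⟩ := ht
  have hs1 : t.1 < w.1 := by
    rcases htw1.lt_or_eq with h | h
    · exact h
    · simp [DecPair, h] at hdec
  have hs2 : w.2 < t.2 := by
    rcases htw2.lt_or_eq with h | h
    · exact h
    · simp [DecPair, h] at hdec
  have htL := mem_line hx hy (hl ▸ left_mem_line htX)
  have hwL := mem_line hx hy (hl ▸ right_mem_line hwX)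
  have htQ := hQ2 t htX
  have hwQ := hQ2 w hwX
  have htB := hbox t htX
  have hwB := hbox w hwX
  have hm := hmin a d haX hdX (by unfold DecPair; nlinarith)
    ⟨⟨hx.le, hy.le⟩, fun h => by rw [h] at hx; exact lt_irrefl _ hx⟩ hl.symm
  have hat' : ¬ (a.1 = t.1 ∧ a.2 = t.2) := fun h => hat (Prod.ext h.1 h.2)
  have haw' : ¬ (a.1 = w.1 ∧ a.2 = w.2) := fun h => haw (Prod.ext h.1 h.2)
  rcases hm with ⟨⟨hw1, hw2⟩, hwd⟩ | ⟨rfl, ha1, ha2⟩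
  · have hwd' : ¬ (w.1 = d.1 ∧ w.2 = d.2) := fun h => hwd (Prod.ext h.1 h.2)
    rcases hwL with ⟨p1, p2⟩ | ⟨⟨p1, p2⟩, -⟩ | ⟨p1, p2⟩
    · exact absurd ⟨by linarith, by linarith⟩ htQ
    · by_cases hc : w.2 = a.2
      · have hw : a.1 < w.1 := lt_of_le_of_ne p1 fun h => haw' ⟨h, hc.symm⟩
        have hta : leD t a := by
          rcases htL with h | ⟨⟨_, h⟩, _⟩ | ⟨_, h⟩
          · exact h
          · linarith
          · linarith
        have h2 : a.2 < t.2 := by linarith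
        refine ⟨2, ⟨le_antisymm hta.1 ?_, h2⟩, hw, hw1, hc⟩
        exact not_lt.1 fun h => htQ ⟨h, h2⟩
      · have hw : w.2 < a.2 := lt_of_le_of_ne p2 hc
        have hwa : w.1 = a.1 := by
          by_contra hne
          exact hwd (hwB (lt_of_le_of_ne p1 (Ne.symm hne)) hw1 hw2 hw)
        have h1 : t.1 < a.1 := by linarith
        have hta : leD t a := by
          rcases htL with h | ⟨⟨h, _⟩, _⟩ | ⟨h, _⟩
          · exact h
          · linarith
          · linarith
        refine ⟨3, ⟨le_antisymm ?_ hta.2, h1⟩, hwa, hw2, hw⟩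
        exact not_lt.1 fun h => htQ ⟨h1, h⟩
    · exact absurd ⟨le_antisymm hw1 p1, le_antisymm p2 hw2⟩ hwd'
  · by_cases hc : t.2 = a.2
    · refine ⟨0, ?_⟩
      simp only [Placement, PlacementA]
      grind
    · refine ⟨1, ?_⟩
      simp only [Placement, PlacementB]
      grind

/-- Under the Assumptions, exactly one of the four placement options holds for
`(t₁,w₁)` (w.r.t. `d₁`), and exactly one holds for `(t₂,w₂)` (w.r.t. `d₂`). -/
theorem placement_options (X : Finset (ℝ × ℝ)) (a d₁ d₂ t₁ w₁ t₂ w₂ : ℝ × ℝ)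
    (hnc : NonCollinear X) (haX : a ∈ X) (hiso : NotEndpoint X a)
    (hQ2 : ∀ z ∈ X, ¬(z.1 < a.1 ∧ a.2 < z.2))
    (hQ4 : ∃ z ∈ X, a.1 < z.1 ∧ z.2 < a.2)
    (hd1X : d₁ ∈ X) (hd1 : a.1 < d₁.1 ∧ d₁.2 < a.2)
    (hd1strip : ∀ z ∈ X, ¬(a.1 < z.1 ∧ d₁.2 < z.2 ∧ z.2 < a.2))
    (hd1seg : ∀ z ∈ X, ¬(a.1 < z.1 ∧ z.1 < d₁.1 ∧ z.2 = d₁.2))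
    (hd2X : d₂ ∈ X) (hd2 : a.1 < d₂.1 ∧ d₂.2 < a.2)
    (hd2strip : ∀ z ∈ X, ¬(a.1 < z.1 ∧ z.1 < d₂.1 ∧ z.2 < a.2))
    (hd2seg : ∀ z ∈ X, ¬(z.1 = d₂.1 ∧ d₂.2 < z.2 ∧ z.2 < a.2))
    (ht1 : RedArrow X t₁ w₁) (hl1 : lineThrough X t₁ w₁ = lineThrough X a d₁)
    (ht2 : RedArrow X t₂ w₂) (hl2 : lineThrough X t₂ w₂ = lineThrough X a d₂) :
    (∃! i : Fin 4, Placement a d₁ t₁ w₁ i) ∧ (∃! i : Fin 4, Placement a d₂ t₂ w₂ i) := by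
  constructor
  · refine placement_core X a d₁ t₁ w₁ haX hiso hQ2 hd1X hd1 ?_ ht1 hl1
    intro z hz h1 h2 h3 h4
    have e2 : z.2 = d₁.2 := by
      rcases h3.lt_or_eq with h | h
      · exact absurd ⟨h1, h, h4⟩ (hd1strip z hz)
      · exact h.symm
    refine Prod.ext ?_ e2
    rcases h2.lt_or_eq with h | h
    · exact absurd ⟨h1, h, e2⟩ (hd1seg z hz)
    · exact h
  · refine placement_core X a d₂ t₂ w₂ haX hiso hQ2 hd2X hd2 ?_ ht2 hl2
    intro z hz h1 h2 h3 h4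
    have e1 : z.1 = d₂.1 := by
      rcases h2.lt_or_eq with h | h
      · exact absurd ⟨h1, h, h4⟩ (hd2strip z hz)
      · exact h
    refine Prod.ext e1 ?_
    rcases h3.lt_or_eq with h | h
    · exact absurd ⟨e1, h, h4⟩ (hd2seg z hz)
    · exact h.symm
end
end

section
/- Suppose the Assumptions hold and d₁ ≠ d₂. Then one of the following holds: (i) t₁ ∈ (x(a),x(d₁))×{y(a)} and w₁ = d₁, and t₂ ∈ {x(a)}×(y(d₂),y(a)) and w₂ = d₂; or (ii) t₁ ∈ (x(a),x(d₁))×{y(a)} and w₁ = d₁, and t₂ ∈ (−∞,x(a))×{y(a)} and w₂ ∈ {x(a)}×[y(d₂),y(a)); or (iii) t₁ ∈ {x(a)}×(y(a),∞) and w₁ ∈ (x(a),x(d₁)]×{y(a)}, and t₂ ∈ {x(a)}×(y(d₂),y(a)) and w₂ = d₂. Moreover, the segments (x(a),x(d₂)]×{y(a)} and {x(a)}×[y(d₁),y(a)) are both empty. -/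
noncomputable section
open Classical

lemma abs_btw_iff (u z v : ℝ) : |u - v| = |u - z| + |z - v| ↔ (u ≤ z ∧ z ≤ v) ∨ (v ≤ z ∧ z ≤ u) := by
  rcases abs_cases (u - v) with h | h <;> rcases abs_cases (u - z) with h' | h' <;>
    rcases abs_cases (z - v) with h'' | h'' <;> grind

lemma rho_btw_iff (u z v : ℝ × ℝ) : rho u v = rho u z + rho z v ↔
    ((u.1 ≤ z.1 ∧ z.1 ≤ v.1) ∨ (v.1 ≤ z.1 ∧ z.1 ≤ u.1)) ∧
    ((u.2 ≤ z.2 ∧ z.2 ≤ v.2) ∨ (v.2 ≤ z.2 ∧ z.2 ≤ u.2)) := by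
  rw [← abs_btw_iff, ← abs_btw_iff]
  have h1 := abs_sub_le u.1 z.1 v.1
  have h2 := abs_sub_le u.2 z.2 v.2
  unfold rho
  constructor
  · intro h
    constructor <;> linarith
  · rintro ⟨h, h'⟩
    linarith

lemma mem_dec (X : Finset (ℝ × ℝ)) {p q : ℝ × ℝ} (h1 : p.1 < q.1) (h2 : q.2 < p.2) (z : ℝ × ℝ)
    (hz : z ∈ X) : z ∈ lineThrough X p q ↔
      ((p.1 ≤ z.1 ∧ z.1 ≤ q.1 ∧ q.2 ≤ z.2 ∧ z.2 ≤ p.2) ∨ (z.1 ≤ p.1 ∧ p.2 ≤ z.2) ∨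
        (q.1 ≤ z.1 ∧ z.2 ≤ q.2)) := by
  simp only [lineThrough, Finset.mem_filter, MBtw, rho_btw_iff, hz, true_and, ne_eq, Prod.ext_iff]
  grind

lemma mem_inc (X : Finset (ℝ × ℝ)) {p q : ℝ × ℝ} (h1 : p.1 < q.1) (h2 : p.2 < q.2) (z : ℝ × ℝ)
    (hz : z ∈ X) : z ∈ lineThrough X p q ↔
      ((p.1 ≤ z.1 ∧ z.1 ≤ q.1 ∧ p.2 ≤ z.2 ∧ z.2 ≤ q.2) ∨ (z.1 ≤ p.1 ∧ z.2 ≤ p.2) ∨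
        (q.1 ≤ z.1 ∧ q.2 ≤ z.2)) := by
  simp only [lineThrough, Finset.mem_filter, MBtw, rho_btw_iff, hz, true_and, ne_eq, Prod.ext_iff]
  grind

lemma mem_vert (X : Finset (ℝ × ℝ)) {p q : ℝ × ℝ} (h1 : p.1 = q.1) (h2 : q.2 < p.2) (z : ℝ × ℝ)
    (hz : z ∈ X) : z ∈ lineThrough X p q ↔ (z.1 = p.1 ∨ p.2 ≤ z.2 ∨ z.2 ≤ q.2) := by
  simp only [lineThrough, Finset.mem_filter, MBtw, rho_btw_iff, hz, true_and, ne_eq, Prod.ext_iff]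
  grind

lemma mem_horiz (X : Finset (ℝ × ℝ)) {p q : ℝ × ℝ} (h1 : p.1 < q.1) (h2 : p.2 = q.2) (z : ℝ × ℝ)
    (hz : z ∈ X) : z ∈ lineThrough X p q ↔ (z.2 = p.2 ∨ z.1 ≤ p.1 ∨ q.1 ≤ z.1) := by
  simp only [lineThrough, Finset.mem_filter, MBtw, rho_btw_iff, hz, true_and, ne_eq, Prod.ext_iff]
  grind

lemma noncol_ex {X : Finset (ℝ × ℝ)} (h : NonCollinear X) {p q : ℝ × ℝ} (hp : p ∈ X) (hq : q ∈ X)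
    (hne : p ≠ q) : ∃ z ∈ X, z ∉ lineThrough X p q := by
  by_contra! hc
  exact h p hp q hq hne (Finset.Subset.antisymm (Finset.filter_subset _ _) hc)

lemma dec_iff {p q : ℝ × ℝ} : (DecPair p q ∧ ltD p q) ↔ (p.1 < q.1 ∧ q.2 < p.2) := by
  unfold DecPair ltD leD
  constructor
  · rintro ⟨h, ⟨h1, h2⟩, -⟩
    constructor
    · rcases h1.lt_or_eq with h | h'
      · exact h
      · rw [h'] at h; simp at h
    · rcases h2.lt_or_eq with h | h'
      · exact h
      · rw [h'] at h; simp at h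
  · rintro ⟨h1, h2⟩
    refine ⟨mul_neg_of_pos_of_neg (by linarith) (by linarith), ⟨h1.le, h2.le⟩, ?_⟩
    rintro rfl
    exact lt_irrefl _ h1

lemma inc_iff {p q : ℝ × ℝ} : (IncPair p q ∧ ltI p q) ↔ (p.1 < q.1 ∧ p.2 < q.2) := by
  unfold IncPair ltI leI
  constructor
  · rintro ⟨h, ⟨h1, h2⟩, -⟩
    constructor
    · rcases h1.lt_or_eq with h | h'
      · exact h
      · rw [h'] at h; simp at h
    · rcases h2.lt_or_eq with h | h'
      · exact h
      · rw [h'] at h; simp at h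
  · rintro ⟨h1, h2⟩
    refine ⟨mul_pos (by linarith) (by linarith), ⟨h1.le, h2.le⟩, ?_⟩
    rintro rfl
    exact lt_irrefl _ h1

/-- Every line generated by an increasing pair has a blue arrow. -/
lemma exists_blue (X : Finset (ℝ × ℝ)) {u v : ℝ × ℝ} (hu : u ∈ X) (hv : v ∈ X)
    (h1 : u.1 < v.1) (h2 : u.2 < v.2) :
    ∃ p q, BlueArrow X p q ∧ lineThrough X p q = lineThrough X u v := by
  let S := (X ×ˢ X).filter fun r => (r.1.1 < r.2.1 ∧ r.1.2 < r.2.2) ∧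
    lineThrough X r.1 r.2 = lineThrough X u v
  have hS : ∀ r, r ∈ S ↔ (r.1 ∈ X ∧ r.2 ∈ X) ∧ (r.1.1 < r.2.1 ∧ r.1.2 < r.2.2) ∧
    lineThrough X r.1 r.2 = lineThrough X u v := by
    intro r
    simp only [S, Finset.mem_filter, Finset.mem_product]
  obtain ⟨⟨p0, q⟩, hr, hmin⟩ := Finset.exists_min_image S (fun r => r.2.1 + r.2.2)
    ⟨(u, v), (hS _).2 ⟨⟨hu, hv⟩, ⟨h1, h2⟩, rfl⟩⟩
  let T := S.filter fun r => r.2 = q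
  obtain ⟨⟨p, q'⟩, hr', hmax⟩ := Finset.exists_max_image T (fun r => r.1.1 + r.1.2)
    ⟨(p0, q), Finset.mem_filter.2 ⟨hr, rfl⟩⟩
  obtain ⟨hpS, hq'⟩ := Finset.mem_filter.1 hr'
  simp only at hq'
  subst hq'
  obtain ⟨⟨hpX, hqX⟩, hlt, hline⟩ := (hS _).1 hpS
  simp only at hpX hqX hlt hline
  refine ⟨p, q', ⟨hpX, hqX, (inc_iff.2 hlt).1, (inc_iff.2 hlt).2, ?_⟩, hline⟩
  intro a b ha hb hab hab' hl
  have hlt' := inc_iff.1 ⟨hab, hab'⟩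
  have habS : (a, b) ∈ S := (hS _).2 ⟨⟨ha, hb⟩, hlt', hl.trans hline⟩
  have hb1 := (mem_inc X hlt'.1 hlt'.2 b hb).2 (by grind)
  have ha1 := (mem_inc X hlt'.1 hlt'.2 a ha).2 (by grind)
  rw [hl, mem_inc X hlt.1 hlt.2 _ hb] at hb1
  rw [hl, mem_inc X hlt.1 hlt.2 _ ha] at ha1
  have hm := hmin _ habS
  simp only at hm
  by_cases hqb : q' = b
  · right
    refine ⟨hqb, ?_⟩
    have hm2 := hmax (a, b) (Finset.mem_filter.2 ⟨habS, hqb.symm⟩)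
    simp only at hm2
    subst hqb
    unfold leI
    grind
  · left
    refine ⟨?_, hqb⟩
    have : ¬ (q'.1 = b.1 ∧ q'.2 = b.2) := fun h => hqb (Prod.ext h.1 h.2)
    unfold leI
    grind

lemma placement_one {X : Finset (ℝ × ℝ)} {a d t w : ℝ × ℝ} (haX : a ∈ X) (hiso : NotEndpoint X a)
    (hQ2 : ∀ z ∈ X, ¬(z.1 < a.1 ∧ a.2 < z.2)) (hdX : d ∈ X) (hd : a.1 < d.1 ∧ d.2 < a.2)
    (hbox : ∀ z ∈ X, a.1 < z.1 → z.1 ≤ d.1 → d.2 ≤ z.2 → z.2 < a.2 → z = d)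
    (ht : RedArrow X t w) (hl : lineThrough X t w = lineThrough X a d) :
    PlacementA a d t w ∨ PlacementB a d t w ∨ PlacementC a d t w ∨ PlacementD a d t w := by
  obtain ⟨hat, haw⟩ := hiso t w (Or.inr ht)
  obtain ⟨htX, hwX, hdec, hlt, hmin⟩ := ht
  have htw := dec_iff.1 ⟨hdec, hlt⟩
  have hadd := dec_iff.2 hd
  have hm := hmin a d haX hdX hadd.1 hadd.2 hl.symm
  have hw1 := (mem_dec X htw.1 htw.2 w hwX).2 (by grind)
  have ht1 := (mem_dec X htw.1 htw.2 t htX).2 (by grind)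
  rw [hl, mem_dec X hd.1 hd.2 _ hwX] at hw1
  rw [hl, mem_dec X hd.1 hd.2 _ htX] at ht1
  have hQt := hQ2 t htX
  have hQw := hQ2 w hwX
  have hbt := hbox t htX
  have hbw := hbox w hwX
  have hat' : ¬ (a.1 = t.1 ∧ a.2 = t.2) := fun h => hat (Prod.ext h.1 h.2)
  have haw' : ¬ (a.1 = w.1 ∧ a.2 = w.2) := fun h => haw (Prod.ext h.1 h.2)
  clear hmin hQ2 hbox hiso hl hadd hdec hlt
  unfold PlacementA PlacementB PlacementC PlacementD
  by_cases hwd : w = d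
  · subst hwd
    have hta : a.1 ≤ t.1 ∧ t.2 ≤ a.2 := by
      rcases hm with h | h
      · exact absurd rfl h.2
      · exact h.2
    have hbt' : ¬ (a.1 < t.1 ∧ t.2 < a.2) := by
      rintro ⟨h1, h2⟩
      have := hbt h1 htw.1.le htw.2.le h2
      rw [this] at htw
      exact lt_irrefl _ htw.1
    clear hbt hbw hm hw1 ht1
    grind
  · have hwd' : w.1 ≤ d.1 ∧ d.2 ≤ w.2 := by
      rcases hm with h | h
      · exact h.1
      · exact absurd h.1 hwd
    have hbw' : ¬ (a.1 < w.1 ∧ w.2 < a.2) := fun h => hwd (hbw h.1 hwd'.1 hwd'.2 h.2)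
    clear hm hbw hbt
    have haw2 : a.1 ≤ w.1 ∧ w.2 ≤ a.2 := by
      clear ht1
      grind
    have hta : t.1 ≤ a.1 ∧ a.2 ≤ t.2 := by
      grind
    clear ht1 hw1
    grind

/-- Under the Assumptions, if `d₁ ≠ d₂` then the placements `(t₁,w₁)`/`(t₂,w₂)`
follow options (a)/(b), (a)/(d), or (c)/(b), and moreover the segments
`(x(a),x(d₂)]×{y(a)}` and `{x(a)}×[y(d₁),y(a))` are both empty. -/
theorem placement_locations (X : Finset (ℝ × ℝ)) (a d₁ d₂ t₁ w₁ t₂ w₂ : ℝ × ℝ)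
    (hnc : NonCollinear X) (haX : a ∈ X) (hiso : NotEndpoint X a)
    (hQ2 : ∀ z ∈ X, ¬(z.1 < a.1 ∧ a.2 < z.2))
    (hQ4 : ∃ z ∈ X, a.1 < z.1 ∧ z.2 < a.2)
    (hd1X : d₁ ∈ X) (hd1 : a.1 < d₁.1 ∧ d₁.2 < a.2)
    (hd1strip : ∀ z ∈ X, ¬(a.1 < z.1 ∧ d₁.2 < z.2 ∧ z.2 < a.2))
    (hd1seg : ∀ z ∈ X, ¬(a.1 < z.1 ∧ z.1 < d₁.1 ∧ z.2 = d₁.2))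
    (hd2X : d₂ ∈ X) (hd2 : a.1 < d₂.1 ∧ d₂.2 < a.2)
    (hd2strip : ∀ z ∈ X, ¬(a.1 < z.1 ∧ z.1 < d₂.1 ∧ z.2 < a.2))
    (hd2seg : ∀ z ∈ X, ¬(z.1 = d₂.1 ∧ d₂.2 < z.2 ∧ z.2 < a.2))
    (ht1 : RedArrow X t₁ w₁) (hl1 : lineThrough X t₁ w₁ = lineThrough X a d₁)
    (ht2 : RedArrow X t₂ w₂) (hl2 : lineThrough X t₂ w₂ = lineThrough X a d₂)
    (hne : d₁ ≠ d₂) :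
    ((PlacementA a d₁ t₁ w₁ ∧ PlacementB a d₂ t₂ w₂) ∨
     (PlacementA a d₁ t₁ w₁ ∧ PlacementD a d₂ t₂ w₂) ∨
     (PlacementC a d₁ t₁ w₁ ∧ PlacementB a d₂ t₂ w₂)) ∧
    (∀ z ∈ X, ¬(a.1 < z.1 ∧ z.1 ≤ d₂.1 ∧ z.2 = a.2)) ∧
    (∀ z ∈ X, ¬(z.1 = a.1 ∧ d₁.2 ≤ z.2 ∧ z.2 < a.2)) := by
  have hdd1 : d₂.1 < d₁.1 := by
    have := hd1strip d₂ hd2X; have := hd1seg d₂ hd2X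
    have := hd2strip d₁ hd1X; have := hd2seg d₁ hd1X
    simp only [ne_eq, Prod.ext_iff] at hne
    grind
  have hdd2 : d₂.2 < d₁.2 := by
    have := hd1strip d₂ hd2X; have := hd1seg d₂ hd2X
    have := hd2strip d₁ hd1X; have := hd2seg d₁ hd1X
    simp only [ne_eq, Prod.ext_iff] at hne
    grind
  have hP1 := placement_one haX hiso hQ2 hd1X hd1 (by
    intro z hz h1 h2 h3 h4
    have := hd1strip z hz; have := hd1seg z hz
    rw [Prod.ext_iff]; grind) ht1 hl1
  have hP2 := placement_one haX hiso hQ2 hd2X hd2 (by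
    intro z hz h1 h2 h3 h4
    have := hd2strip z hz; have := hd2seg z hz
    rw [Prod.ext_iff]; grind) ht2 hl2
  have ht1X := ht1.1
  have hw1X := ht1.2.1
  have ht2X := ht2.1
  have hw2X := ht2.2.1
  have hlt1 := dec_iff.1 ⟨ht1.2.2.1, ht1.2.2.2.1⟩
  have hlt2 := dec_iff.1 ⟨ht2.2.2.1, ht2.2.2.2.1⟩
  have key1 : ∀ z ∈ X, _ := fun z hz => by
    have h := (mem_dec X hlt1.1 hlt1.2 z hz).symm
    rw [hl1, mem_dec X hd1.1 hd1.2 z hz] at h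
    exact h
  have key2 : ∀ z ∈ X, _ := fun z hz => by
    have h := (mem_dec X hlt2.1 hlt2.2 z hz).symm
    rw [hl2, mem_dec X hd2.1 hd2.2 z hz] at h
    exact h
  -- first index: only A or C
  have hAC : PlacementA a d₁ t₁ w₁ ∨ PlacementC a d₁ t₁ w₁ := by
    rcases hP1 with h | h | h | h
    · exact Or.inl h
    · exfalso
      obtain ⟨⟨e1, e2, e3⟩, rfl⟩ := h
      obtain ⟨z, hz, hzl⟩ := noncol_ex hnc haX ht1X (by rintro rfl; exact lt_irrefl _ e3)
      rw [mem_vert X e1.symm e3 z hz] at hzl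
      have := hd1strip z hz
      have := key1 z hz
      grind
    · exact Or.inr h
    · exfalso
      obtain ⟨⟨e1, e2⟩, e3, e4, e5⟩ := h
      have := key1 d₂ hd2X
      have := hd2strip d₁ hd1X
      have := hd1strip d₂ hd2X
      grind
  have hBD : PlacementB a d₂ t₂ w₂ ∨ PlacementD a d₂ t₂ w₂ := by
    rcases hP2 with h | h | h | h
    · exfalso
      obtain ⟨⟨e1, e2, e3⟩, rfl⟩ := h
      obtain ⟨z, hz, hzl⟩ := noncol_ex hnc haX ht2X (by rintro rfl; exact lt_irrefl _ e1)
      rw [mem_horiz X e1 e3.symm z hz] at hzl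
      have := hd2strip z hz
      have := key2 z hz
      grind
    · exact Or.inl h
    · exfalso
      obtain ⟨⟨e1, e2⟩, e3, e4, e5⟩ := h
      have := key2 d₁ hd1X
      grind
    · exact Or.inr h
  have hseg2 : ∀ z ∈ X, ¬(a.1 < z.1 ∧ z.1 ≤ d₂.1 ∧ z.2 = a.2) := by
    intro z hz hc
    have := key2 z hz
    rcases hBD with ⟨⟨e1, e2, e3⟩, rfl⟩ | ⟨⟨e1, e2⟩, e3, e4, e5⟩ <;> grind
  have hseg1 : ∀ z ∈ X, ¬(z.1 = a.1 ∧ d₁.2 ≤ z.2 ∧ z.2 < a.2) := by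
    intro z hz hc
    have := key1 z hz
    rcases hAC with ⟨⟨e1, e2, e3⟩, rfl⟩ | ⟨⟨e1, e2⟩, e3, e4, e5⟩ <;> grind
  refine ⟨?_, hseg2, hseg1⟩
  rcases hAC with hA | hC
  · rcases hBD with hB | hD
    · exact Or.inl ⟨hA, hB⟩
    · exact Or.inr (Or.inl ⟨hA, hD⟩)
  rcases hBD with hB | hD
  · exact Or.inr (Or.inr ⟨hC, hB⟩)
  exfalso
  obtain ⟨⟨e1, e2⟩, e3, e4, e5⟩ := hD
  obtain ⟨v, hv, hvl⟩ := noncol_ex hnc ht2X haX (by rintro rfl; exact lt_irrefl _ e2)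
  rw [mem_horiz X e2 e1 v hv] at hvl
  have hv1 : v.1 < a.1 := by grind
  have hv2 : v.2 ≤ w₂.2 := by
    have := key2 v hv
    have := hQ2 v hv
    grind
  have hv3 : v.2 < a.2 := by linarith
  obtain ⟨p, q, hpq, hline⟩ := exists_blue X hv haX hv1 hv3
  have hqa := (hiso p q (Or.inl hpq)).2
  obtain ⟨hpX, hqX, hinc, hltpq, hmin⟩ := hpq
  have hva := inc_iff.2 ⟨hv1, hv3⟩
  have hm := hmin v a hv haX hva.1 hva.2 hline.symm
  have hltpq' := inc_iff.1 ⟨hinc, hltpq⟩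
  have key3 : ∀ z ∈ X, _ := fun z hz => by
    have h := (mem_inc X hltpq'.1 hltpq'.2 z hz).symm
    rw [hline, mem_inc X hv1 hv3 z hz] at h
    exact h
  have hqle : q.1 ≤ a.1 ∧ q.2 ≤ a.2 := by
    rcases hm with h | h
    · exact h.1
    · exact absurd h.1.symm hqa
  have k1 := key3 d₁ hd1X
  have k2 := key3 w₂ hw2X
  have s1 := hseg1 q hqX
  have s2 := hseg1 w₂ hw2X
  have hqd : d₁.2 < q.2 := by
    by_contra hc
    have : q.1 ≤ d₁.1 ∧ q.2 ≤ d₁.2 := ⟨by linarith, by linarith⟩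
    grind
  have hqa' : ¬ (q.1 = a.1 ∧ q.2 = a.2) := fun h => hqa (Prod.ext h.1 h.2).symm
  grind
end
end
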